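/- Suppose μ is a T-ergodic Borel probability measure on Ω that has a local product structure and full support (supp μ = Ω). Suppose T has a fixed point in Ω, and Ω contains at least one point that is not a fixed point of T. Then the set 𝔏(A,μ) = {k ∈ [0,π] : L(A^{(k)}, μ) = 0} is finite. -/

import Mathlib

open Real MeasureTheory Filter Topology Matrix Set

noncomputable section

/-- The left shift on bi-infinite sequences: `(Tω)_n = ω_{n+1}`. -/
def shift (ω : ℤ → ℕ) : ℤ → ℕ := fun n => ω (n + 1)

/-- The subshift of finite type: sequences with letters in `{1,…,ℓ}` and all
transitions `(ω_n, ω_{n+1})` in the allowed set `W`. -/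
def SFT (ℓ : ℕ) (W : Set (ℕ × ℕ)) : Set (ℤ → ℕ) :=
  {ω | (∀ n, 1 ≤ ω n ∧ ω n ≤ ℓ) ∧ ∀ n, (ω n, ω (n + 1)) ∈ W}

/-- The cocycle matrix
`A^{(k)}(ω) = √(ω₀/ω₋₁)·[[((ω₀+ω₋₁)/ω₀)·cos k, −ω₋₁/ω₀],[1, 0]]`. -/
def Acoc (k : ℝ) (ω : ℤ → ℕ) : Matrix (Fin 2) (Fin 2) ℝ :=
  Real.sqrt ((ω 0 : ℝ) / (ω (-1) : ℝ)) •
    !![((ω 0 : ℝ) + (ω (-1) : ℝ)) / (ω 0 : ℝ) * Real.cos k, -((ω (-1) : ℝ) / (ω 0 : ℝ));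
       (1 : ℝ), 0]

/-- The iterated cocycle `A_n(ω) = A^{(k)}(T^{n−1}ω)⋯A^{(k)}(ω)` for `n ≥ 0`,
with `A_0(ω) = Id`. -/
def AIter (k : ℝ) (ω : ℤ → ℕ) : ℕ → Matrix (Fin 2) (Fin 2) ℝ
  | 0 => 1
  | n + 1 => Acoc k (shift^[n] ω) * AIter k ω n

end

/-- We endow 2×2 real matrices with the `L²` operator norm. -/
noncomputable instance : NormedAddCommGroup (Matrix (Fin 2) (Fin 2) ℝ) :=
  Matrix.instL2OpNormedAddCommGroup

/-- Projection onto nonnegative coordinates: `π₊ω = (ω_n)_{n≥0}`. -/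
def projPlus (ω : ℤ → ℕ) : ℕ → ℕ := fun n => ω (n : ℤ)

/-- Projection onto nonpositive coordinates: `π₋ω = (ω_{−n})_{n≥0}`. -/
def projMinus (ω : ℤ → ℕ) : ℕ → ℕ := fun n => ω (-(n : ℤ))

/-- The map `P(ω) = (π₋ω, π₊ω)`; on each cylinder `[0;j]` this is the map `P_j`. -/
def pairProj (ω : ℤ → ℕ) : (ℕ → ℕ) × (ℕ → ℕ) := (projMinus ω, projPlus ω)

/-- `μ` has a local product structure: there is a positive function `ψ` on `Ω`
(written as `ψ ∘ P` for a function on `Ω₋ × Ω₊`) such that for each letter `j`,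
`ψ∘P_j⁻¹` is integrable with respect to `μ_j^− × μ_j^+` and
`(P_j)_* μ_j = (ψ∘P_j⁻¹) d(μ_j^− × μ_j^+)`. -/
def LocalProductStructure (ℓ : ℕ) (W : Set (ℕ × ℕ)) (μ : Measure (ℤ → ℕ)) : Prop :=
  ∃ ψ : (ℕ → ℕ) × (ℕ → ℕ) → ℝ,
    (∀ ω ∈ SFT ℓ W, 0 < ψ (pairProj ω)) ∧
    ∀ j : ℕ, 1 ≤ j → j ≤ ℓ →
      MeasureTheory.Integrable ψ
        (((Measure.map projMinus μ).restrict {a | a 0 = j}).prod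
          ((Measure.map projPlus μ).restrict {a | a 0 = j})) ∧
      Measure.map pairProj (μ.restrict {ω | ω 0 = j}) =
        (((Measure.map projMinus μ).restrict {a | a 0 = j}).prod
          ((Measure.map projPlus μ).restrict {a | a 0 = j})).withDensity
          (fun x => ENNReal.ofReal (ψ x))

/-- `supp μ = Ω`: every open set meeting `Ω` has positive measure. -/
def FullSupport (ℓ : ℕ) (W : Set (ℕ × ℕ)) (μ : Measure (ℤ → ℕ)) : Prop :=
  ∀ U : Set (ℤ → ℕ), IsOpen U → (U ∩ SFT ℓ W).Nonempty → 0 < μ U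

section Entropy

/-- The Bregman divergence of `t ↦ t log t` dominates the squared Hellinger distance. -/
lemma sq_sqrt_sub_sqrt_le_bregman {s t : ℝ} (hs : 0 < s) (ht : 0 < t) :
    (√t - √s) ^ 2 ≤ t * log t - s * log s - (1 + log s) * (t - s) := by
  obtain ⟨a, ha, rfl⟩ : ∃ a : ℝ, 0 < a ∧ s = a ^ 2 := ⟨√s, by positivity, by rw [sq_sqrt hs.le]⟩
  obtain ⟨b, hb, rfl⟩ : ∃ b : ℝ, 0 < b ∧ t = b ^ 2 := ⟨√t, by positivity, by rw [sq_sqrt ht.le]⟩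
  rw [sqrt_sq ha.le, sqrt_sq hb.le, log_pow, log_pow]
  have h := log_le_sub_one_of_pos (div_pos ha hb)
  rw [log_div ha.ne' hb.ne'] at h
  have h2 : b ^ 2 * (log a - log b) ≤ b ^ 2 * (a / b - 1) := by gcongr
  have h3 : b ^ 2 * (a / b - 1) = a * b - b ^ 2 := by field_simp
  push_cast
  nlinarith

lemma abs_sub_le_sq_sqrt_sub_sqrt {s t ε : ℝ} (hs : 0 ≤ s) (ht : 0 ≤ t) (hε : 0 < ε) :
    |t - s| ≤ (√t - √s) ^ 2 / (4 * ε) + 2 * ε * (t + s) := by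
  obtain ⟨a, ha, rfl⟩ : ∃ a : ℝ, 0 ≤ a ∧ s = a ^ 2 := ⟨√s, by positivity, by rw [sq_sqrt hs]⟩
  obtain ⟨b, hb, rfl⟩ : ∃ b : ℝ, 0 ≤ b ∧ t = b ^ 2 := ⟨√t, by positivity, by rw [sq_sqrt ht]⟩
  rw [sqrt_sq ha, sqrt_sq hb, show b ^ 2 - a ^ 2 = (b - a) * (b + a) by ring, abs_mul,
    abs_of_nonneg (add_nonneg hb ha), div_add' _ _ _ (by positivity), le_div_iff₀ (by positivity)]
  have h := sq_nonneg (|b - a| - 2 * ε * (b + a))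
  have h2 := sq_abs (b - a)
  have h3 := mul_nonneg (sq_nonneg ε) (sq_nonneg (b - a))
  nlinarith

/-- Bounded measurable real functions. -/
def BddMeasurable {E : Type*} [MeasurableSpace E] (f : E → ℝ) : Prop :=
  Measurable f ∧ ∃ C : ℝ, ∀ x, |f x| ≤ C

/-- Measurable functions bounded and bounded away from zero. -/
def Pinched {E : Type*} [MeasurableSpace E] (f : E → ℝ) : Prop :=
  Measurable f ∧ ∃ C : ℝ, 0 < C ∧ ∀ x, C⁻¹ ≤ f x ∧ f x ≤ C

section Basic

variable {E E' : Type*} [MeasurableSpace E] [MeasurableSpace E'] {f g : E → ℝ}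

namespace BddMeasurable

lemma const (c : ℝ) : BddMeasurable (fun _ : E => c) := ⟨measurable_const, |c|, fun _ => le_rfl⟩

lemma add (hf : BddMeasurable f) (hg : BddMeasurable g) : BddMeasurable (fun x => f x + g x) := by
  obtain ⟨hf, C, hC⟩ := hf
  obtain ⟨hg, D, hD⟩ := hg
  exact ⟨hf.add hg, C + D, fun x => (abs_add_le _ _).trans (add_le_add (hC x) (hD x))⟩

lemma mul (hf : BddMeasurable f) (hg : BddMeasurable g) : BddMeasurable (fun x => f x * g x) := by
  obtain ⟨hf, C, hC⟩ := hf
  obtain ⟨hg, D, hD⟩ := hg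
  refine ⟨hf.mul hg, C * D, fun x => ?_⟩
  rw [abs_mul]
  exact mul_le_mul (hC x) (hD x) (abs_nonneg _) ((abs_nonneg _).trans (hC x))

lemma neg (hf : BddMeasurable f) : BddMeasurable (fun x => -f x) := by
  simpa using (const (-1)).mul hf

lemma sub (hf : BddMeasurable f) (hg : BddMeasurable g) : BddMeasurable (fun x => f x - g x) := by
  simpa [sub_eq_add_neg] using hf.add hg.neg

lemma comp {u : E' → E} (hf : BddMeasurable f) (hu : Measurable u) :
    BddMeasurable (fun x => f (u x)) :=
  ⟨hf.1.comp hu, hf.2.imp fun _ h x => h (u x)⟩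

lemma integrable (hf : BddMeasurable f) (P : Measure E) [IsFiniteMeasure P] : Integrable f P := by
  obtain ⟨hf, C, hC⟩ := hf
  exact Integrable.of_bound hf.aestronglyMeasurable C (ae_of_all _ hC)

end BddMeasurable

namespace Pinched

lemma pos (hf : Pinched f) (x : E) : 0 < f x := by
  obtain ⟨-, C, hC, h⟩ := hf
  exact (inv_pos.2 hC).trans_le (h x).1

lemma bdd (hf : Pinched f) : BddMeasurable f :=
  ⟨hf.1, by
    obtain ⟨C, hC, h⟩ := hf.2
    exact ⟨C, fun x => by rw [abs_of_pos (hf.pos x)]; exact (h x).2⟩⟩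

lemma log (hf : Pinched f) : BddMeasurable (fun x => Real.log (f x)) := by
  refine ⟨hf.1.log, ?_⟩
  obtain ⟨C, hC, h⟩ := hf.2
  refine ⟨Real.log C, fun x => abs_le.2 ⟨?_, Real.log_le_log (hf.pos x) (h x).2⟩⟩
  rw [← Real.log_inv]
  exact Real.log_le_log (inv_pos.2 hC) (h x).1

lemma sqrt (hf : Pinched f) : BddMeasurable (fun x => √(f x)) := by
  refine ⟨hf.1.sqrt, ?_⟩
  obtain ⟨C, hC, h⟩ := hf.2
  exact ⟨√C, fun x => by rw [abs_of_nonneg (sqrt_nonneg _)]; exact sqrt_le_sqrt (h x).2⟩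

lemma mul (hf : Pinched f) (hg : Pinched g) : Pinched (fun x => f x * g x) := by
  refine ⟨hf.1.mul hg.1, ?_⟩
  obtain ⟨C, hC, h⟩ := hf.2
  obtain ⟨D, hD, k⟩ := hg.2
  refine ⟨C * D, by positivity, fun x => ⟨?_, ?_⟩⟩
  · rw [mul_inv]
    exact mul_le_mul (h x).1 (k x).1 (by positivity) (hf.pos x).le
  · exact mul_le_mul (h x).2 (k x).2 (hg.pos x).le hC.le

lemma comp {u : E' → E} (hf : Pinched f) (hu : Measurable u) : Pinched (fun x => f (u x)) :=
  ⟨hf.1.comp hu, hf.2.imp fun _ h => ⟨h.1, fun x => h.2 (u x)⟩⟩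

lemma entropy (hf : Pinched f) : BddMeasurable (fun x => f x * Real.log (f x)) :=
  hf.bdd.mul hf.log

end Pinched

end Basic

variable {E : Type*} {𝒢 : MeasurableSpace E} [mE : MeasurableSpace E]

/-- A version of the conditional expectation of a pinched function that is itself pinched. -/
lemma exists_pinched_condExp {f : E → ℝ} (h𝒢 : 𝒢 ≤ mE) (P : Measure E)
    [IsFiniteMeasure P] (hf : Pinched f) :
    ∃ σ : E → ℝ, Measurable[𝒢] σ ∧ Pinched σ ∧
      ∀ Ψ : E → ℝ, Measurable[𝒢] Ψ → BddMeasurable Ψ → ∫ x, Ψ x * σ x ∂P = ∫ x, Ψ x * f x ∂P := by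
  obtain ⟨C, hC, h⟩ := hf.2
  have hint := hf.bdd.integrable P
  have hm : Measurable[𝒢] (fun x => max C⁻¹ (min C ((P[f|𝒢]) x))) :=
    measurable_const.max (measurable_const.min stronglyMeasurable_condExp.measurable)
  refine ⟨_, hm, ⟨hm.mono h𝒢 le_rfl, C, hC, fun x => ⟨le_max_left _ _, ?_⟩⟩, ?_⟩
  · rcases isEmpty_or_nonempty E with hE | ⟨⟨y⟩⟩
    · exact hE.elim x
    · exact max_le ((h y).1.trans (h y).2) (min_le_left _ _)
  · intro Ψ hΨ hΨb
    have h1 : ∀ᵐ x ∂P, C⁻¹ ≤ (P[f|𝒢]) x := by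
      have := condExp_mono (m := 𝒢) (integrable_const (μ := P) C⁻¹) hint
        (ae_of_all _ fun x => (h x).1)
      rwa [condExp_const h𝒢] at this
    have h2 : ∀ᵐ x ∂P, (P[f|𝒢]) x ≤ C := by
      have := condExp_mono (m := 𝒢) hint (integrable_const (μ := P) C)
        (ae_of_all _ fun x => (h x).2)
      rwa [condExp_const h𝒢] at this
    calc ∫ x, Ψ x * max C⁻¹ (min C ((P[f|𝒢]) x)) ∂P
        = ∫ x, (Ψ * P[f|𝒢]) x ∂P := by
          refine integral_congr_ae ?_
          filter_upwards [h1, h2] with x hx1 hx2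
          simp [hx1, hx2]
      _ = ∫ x, (P[Ψ * f|𝒢]) x ∂P :=
          integral_congr_ae (condExp_mul_of_stronglyMeasurable_left hΨ.stronglyMeasurable
            ((hΨb.mul hf.bdd).integrable P) hint).symm
      _ = ∫ x, Ψ x * f x ∂P := integral_condExp h𝒢

/-- A quasi-invariant system: `ρ n` is the density of the push-forward of `P` under `F^[n]`, and
`𝒢` is a sub-σ-algebra mapped into itself by `F`, to which the Jacobians are adapted. -/
structure QuasiInvariant {E : Type*} (𝒢 : MeasurableSpace E) [mE : MeasurableSpace E] (P : Measure E) (F : E ≃ᵐ E) (ρ : ℕ → E → ℝ) :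
    Prop where
  le : 𝒢 ≤ mE
  pinched : ∀ n, Pinched (ρ n)
  cocycle : ∀ n k x, ρ (n + k) x = ρ k x * ρ n (F.symm^[k] x)
  transfer : ∀ n (Φ : E → ℝ), BddMeasurable Φ → ∫ x, Φ (F^[n] x) ∂P = ∫ x, Φ x * ρ n x ∂P
  measurable : Measurable[𝒢, 𝒢] F
  adapted : ∀ k, Measurable[𝒢] (fun x => ρ k (F^[k] x))

namespace QuasiInvariant

variable {P : Measure E} {F : E ≃ᵐ E}
  {ρ : ℕ → E → ℝ}

lemma symm_iterate_iterate (F : E ≃ᵐ E) (k : ℕ) (x : E) : F.symm^[k] (F^[k] x) = x :=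
  (Function.LeftInverse.iterate F.symm_apply_apply k) x

lemma measurable_iterate (h : QuasiInvariant 𝒢 P F ρ) (k : ℕ) : Measurable[𝒢, 𝒢] (F^[k]) :=
  @Measurable.iterate E 𝒢 F h.measurable k

lemma pinched_transfer (h : QuasiInvariant 𝒢 P F ρ) {σ : E → ℝ} (hσ : Pinched σ) (k : ℕ) :
    Pinched (fun x => ρ k x * σ (F.symm^[k] x)) :=
  (h.pinched k).mul (hσ.comp (F.symm.measurable.iterate k))

lemma integral_transfer (h : QuasiInvariant 𝒢 P F ρ) {σ : E → ℝ} (hσ : Pinched σ) (k : ℕ)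
    {Φ : E → ℝ} (hΦ : BddMeasurable Φ) :
    ∫ x, Φ x * (ρ k x * σ (F.symm^[k] x)) ∂P = ∫ x, Φ (F^[k] x) * σ x ∂P := by
  have := h.transfer k (fun x => Φ x * σ (F.symm^[k] x))
    (hΦ.mul (hσ.comp (F.symm.measurable.iterate k)).bdd)
  simp only [symm_iterate_iterate] at this
  rw [this]
  congr 1 with x
  ring

lemma entropy_transfer [IsProbabilityMeasure P] (h : QuasiInvariant 𝒢 P F ρ) {σ : E → ℝ} (hσ : Pinched σ) (k : ℕ) :
    ∫ x, (ρ k x * σ (F.symm^[k] x)) * log (ρ k x * σ (F.symm^[k] x)) ∂P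
      = ∫ x, σ x * log (σ x) ∂P + ∫ x, log (ρ k (F^[k] x)) * σ x ∂P := by
  have h1 := h.integral_transfer hσ k (h.pinched_transfer hσ k).log
  simp only [symm_iterate_iterate] at h1
  have hk : Pinched (fun x => ρ k (F^[k] x)) := (h.pinched k).comp (F.measurable.iterate k)
  rw [← integral_add (hσ.entropy.integrable P) ((hk.log.mul hσ.bdd).integrable P)]
  calc _ = ∫ x, log (ρ k x * σ (F.symm^[k] x)) * (ρ k x * σ (F.symm^[k] x)) ∂P := by
        congr 1 with x; ring
    _ = _ := by
        rw [h1]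
        congr 1 with x
        rw [log_mul (hk.pos x).ne' (hσ.pos x).ne']
        ring

/-- Averages of `Φ` against the densities `ρ n` are asymptotic, in the Cesàro sense, to averages
against their conditional expectations, provided the entropy grows sublinearly. -/
theorem cesaro_sub_condExp [IsProbabilityMeasure P] (h : QuasiInvariant 𝒢 P F ρ) (u : ℕ → ℝ)
    (hu : ∀ N, ∫ x, log (ρ N (F^[N] x)) ∂P ≤ u N)
    (hent : Tendsto (fun N : ℕ => u N / N) atTop (𝓝 0)) :
    ∃ σ : ℕ → E → ℝ, (∀ n, Measurable[𝒢] (σ n) ∧ Pinched (σ n) ∧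
      ∀ Ψ : E → ℝ, Measurable[𝒢] Ψ → BddMeasurable Ψ →
        ∫ x, Ψ x * σ n x ∂P = ∫ x, Ψ x * ρ n x ∂P) ∧
      ∀ (k : ℕ) (Φ : E → ℝ), BddMeasurable Φ → Measurable[𝒢] (fun x => Φ (F^[k] x)) →
        Tendsto (fun N : ℕ => (∑ n ∈ Finset.range N,
          (∫ x, Φ x * ρ (n + k) x ∂P - ∫ x, Φ x * σ (n + k) x ∂P)) / N) atTop (𝓝 0) := by
  choose σ hσm hσp hσ using fun n => exists_pinched_condExp h.le P (h.pinched n)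
  refine ⟨σ, fun n => ⟨hσm n, hσp n, hσ n⟩, fun k Φ hΦ hΦm => ?_⟩
  set e : ℕ → ℝ := fun n => ∫ x, ρ n x * log (ρ n x) ∂P with he
  set a : ℕ → ℝ := fun n => ∫ x, σ n x * log (σ n x) ∂P with ha
  have hρ1 : ∀ n, ∫ x, ρ n x ∂P = 1 := fun n => by
    have := h.transfer n (fun _ => 1) (BddMeasurable.const 1)
    simpa using this.symm
  have hσ1 : ∀ n, ∫ x, σ n x ∂P = 1 := fun n => by
    have := hσ n (fun _ => 1) measurable_const (BddMeasurable.const 1)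
    simpa [hρ1] using this
  have he_le : ∀ n, e n ≤ u n := fun n => by
    refine le_trans (le_of_eq ?_) (hu n)
    rw [h.transfer n _ (h.pinched n).log]
    simp only [he]
    congr 1 with x
    ring
  have ha0 : ∀ n, 0 ≤ a n := fun n => by
    have h1 : ∫ x, (σ n x - 1) ∂P ≤ a n := by
      refine integral_mono (((hσp n).bdd.sub (BddMeasurable.const 1)).integrable P)
        ((hσp n).entropy.integrable P) fun x => ?_
      have := sq_sqrt_sub_sqrt_le_bregman one_pos ((hσp n).pos x)
      simp only [log_one] at this
      nlinarith [sq_nonneg (√(σ n x) - √1)]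
    rw [integral_sub ((hσp n).bdd.integrable P) (integrable_const _), hσ1] at h1
    simpa using h1
  have hlogm : ∀ n, Measurable[𝒢] (fun x => 1 + log (σ n x)) := fun n =>
    measurable_const.add (Real.measurable_log.comp (hσm n))
  have hlogb : ∀ n, BddMeasurable (fun x => 1 + log (σ n x)) := fun n =>
    (BddMeasurable.const 1).add (hσp n).log
  -- Bregman estimate for a function with conditional expectation `σ n`
  have breg : ∀ n (τ : E → ℝ), Pinched τ →
      (∫ x, (1 + log (σ n x)) * τ x ∂P = ∫ x, (1 + log (σ n x)) * σ n x ∂P) →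
      ∫ x, (√(τ x) - √(σ n x)) ^ 2 ∂P ≤ ∫ x, τ x * log (τ x) ∂P - a n := by
    intro n τ hτ hτσ
    have hsq : BddMeasurable (fun x => (√(τ x) - √(σ n x)) ^ 2) := by
      simpa [sq] using (hτ.sqrt.sub (hσp n).sqrt).mul (hτ.sqrt.sub (hσp n).sqrt)
    have i1 := hτ.entropy.integrable P
    have i2 := (hσp n).entropy.integrable P
    have i3 := ((hlogb n).mul hτ.bdd).integrable P
    have i4 := ((hlogb n).mul (hσp n).bdd).integrable P
    calc ∫ x, (√(τ x) - √(σ n x)) ^ 2 ∂P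
        ≤ ∫ x, ((τ x * log (τ x) - σ n x * log (σ n x)) -
            ((1 + log (σ n x)) * τ x - (1 + log (σ n x)) * σ n x)) ∂P := by
          refine integral_mono (hsq.integrable P) ((i1.sub i2).sub (i3.sub i4)) fun x => ?_
          have := sq_sqrt_sub_sqrt_le_bregman ((hσp n).pos x) (hτ.pos x)
          simp only
          linarith
      _ = _ := by
          have := integral_sub (i1.sub i2) (i3.sub i4)
          simp only [Pi.sub_apply] at this
          rw [this, integral_sub i1 i2, integral_sub i3 i4, hτσ]
          ring
  have hd0 : ∀ n, 0 ≤ e n - a n := fun n =>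
    (integral_nonneg fun x => sq_nonneg _).trans
      (breg n (ρ n) (h.pinched n) (hσ n _ (hlogm n) (hlogb n)).symm)
  set τ : ℕ → E → ℝ := fun n x => ρ k x * σ n (F.symm^[k] x) with hτ
  have hτp : ∀ n, Pinched (τ n) := fun n => h.pinched_transfer (hσp n) k
  have hτint : ∀ n (Ψ : E → ℝ), BddMeasurable Ψ → Measurable[𝒢] (fun x => Ψ (F^[k] x)) →
      ∫ x, Ψ x * τ n x ∂P = ∫ x, Ψ x * ρ (n + k) x ∂P := by
    intro n Ψ hΨ hΨm
    simp only [hτ, h.cocycle]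
    rw [h.integral_transfer (hσp n) k hΨ, h.integral_transfer (h.pinched n) k hΨ]
    exact hσ n _ hΨm (hΨ.comp (F.measurable.iterate k))
  have hτe : ∀ n, ∫ x, τ n x * log (τ n x) ∂P = a n + (e (n + k) - e n) := by
    intro n
    have h1 := h.entropy_transfer (hσp n) k
    have h2 := h.entropy_transfer (h.pinched n) k
    have h3 := hσ n (fun x => log (ρ k (F^[k] x))) (Real.measurable_log.comp (h.adapted k))
      ((h.pinched k).log.comp (F.measurable.iterate k))
    simp only [← h.cocycle] at h2
    simp only [hτ, he, ha, h1, h2, h3]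
    ring
  have hmain : ∀ n, ∫ x, (√(τ n x) - √(σ (n + k) x)) ^ 2 ∂P
      ≤ (e (n + k) - a (n + k)) - (e n - a n) := by
    intro n
    have := breg (n + k) (τ n) (hτp n) (by
      rw [hτint n _ (hlogb _), hσ (n + k) _ (hlogm _) (hlogb _)]
      exact (hlogm (n + k)).comp (h.measurable_iterate k))
    rw [hτe] at this
    linarith
  obtain ⟨B, hB⟩ := hΦ.2
  have hB0 : 0 ≤ B := by
    rcases isEmpty_or_nonempty E with hE | ⟨⟨y⟩⟩
    · have := (inferInstance : IsProbabilityMeasure P).measure_univ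
      rw [Set.univ_eq_empty_iff.2 hE, measure_empty] at this
      exact absurd this zero_ne_one
    · exact (abs_nonneg _).trans (hB y)
  have hdiff : ∀ (ε : ℝ), 0 < ε → ∀ n,
      |∫ x, Φ x * ρ (n + k) x ∂P - ∫ x, Φ x * σ (n + k) x ∂P| ≤
        B * (((e (n + k) - a (n + k)) - (e n - a n)) / (4 * ε) + 4 * ε) := by
    intro ε hε n
    rw [← hτint n Φ hΦ hΦm, ← integral_sub ((hΦ.mul (hτp n).bdd).integrable P)
      ((hΦ.mul (hσp _).bdd).integrable P)]
    have hsq : BddMeasurable (fun x => (√(τ n x) - √(σ (n + k) x)) ^ 2) := by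
      simpa [sq] using ((hτp n).sqrt.sub (hσp _).sqrt).mul ((hτp n).sqrt.sub (hσp _).sqrt)
    have i1 := hsq.integrable P
    have i2 := (hτp n).bdd.integrable P
    have i3 := (hσp (n + k)).bdd.integrable P
    have hτ1 : ∫ x, τ n x ∂P = 1 := by
      have := hτint n (fun _ => 1) (BddMeasurable.const 1) measurable_const
      simpa [hρ1] using this
    calc |∫ x, (Φ x * τ n x - Φ x * σ (n + k) x) ∂P|
        ≤ ∫ x, |Φ x * τ n x - Φ x * σ (n + k) x| ∂P := abs_integral_le_integral_abs
      _ ≤ ∫ x, B * ((√(τ n x) - √(σ (n + k) x)) ^ 2 / (4 * ε)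
            + 2 * ε * (τ n x + σ (n + k) x)) ∂P := by
          refine integral_mono (((hΦ.mul (hτp n).bdd).sub
            (hΦ.mul (hσp _).bdd)).integrable P).abs ?_ fun x => ?_
          · exact ((i1.div_const _).add ((i2.add i3).const_mul _)).const_mul _
          · simp only
            rw [← mul_sub, abs_mul]
            exact mul_le_mul (hB x)
              (abs_sub_le_sq_sqrt_sub_sqrt ((hσp _).pos x).le ((hτp n).pos x).le hε)
              (abs_nonneg _) hB0
      _ = B * ((∫ x, (√(τ n x) - √(σ (n + k) x)) ^ 2 ∂P) / (4 * ε) + 4 * ε) := by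
          have := integral_add (i1.div_const (4 * ε)) ((i2.add i3).const_mul (2 * ε))
          simp only [Pi.add_apply] at this
          rw [integral_const_mul, this, integral_div, integral_const_mul, integral_add i2 i3, hτ1, hσ1]
          ring
      _ ≤ _ := by
          gcongr
          exact hmain n
  -- telescoping
  have htel : ∀ N, ∑ n ∈ Finset.range N, ((e (n + k) - a (n + k)) - (e n - a n))
      ≤ ∑ i ∈ Finset.range k, u (i + N) := by
    intro N
    have h1 : ∀ d : ℕ → ℝ, ∑ n ∈ Finset.range N, (d (n + k) - d n)
        = ∑ i ∈ Finset.range k, (d (i + N) - d i) := by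
      intro d
      rw [Finset.sum_sub_distrib, Finset.sum_sub_distrib]
      have p1 := Finset.sum_range_add d k N
      have p2 := Finset.sum_range_add d N k
      rw [add_comm k N, p2] at p1
      simp only [add_comm _ k, add_comm _ N]
      linarith
    rw [h1 (fun n => e n - a n)]
    refine Finset.sum_le_sum fun i _ => ?_
    linarith [hd0 i, ha0 (i + N), he_le (i + N)]
  have hlim : Tendsto (fun N : ℕ => (∑ i ∈ Finset.range k, u (i + N)) / N) atTop (𝓝 0) := by
    simp only [Finset.sum_div]
    rw [show (0 : ℝ) = ∑ i ∈ Finset.range k, 0 by simp]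
    refine tendsto_finsetSum _ fun i _ => ?_
    have h1 : Tendsto (fun N : ℕ => u (i + N) / ((i + N : ℕ) : ℝ)) atTop (𝓝 0) :=
      hent.comp (tendsto_add_atTop_nat i |>.congr fun n => add_comm _ _)
    have h2 : Tendsto (fun N : ℕ => ((i + N : ℕ) : ℝ) / N) atTop (𝓝 1) := by
      have : Tendsto (fun N : ℕ => (i : ℝ) / N + 1) atTop (𝓝 (0 + 1)) :=
        (tendsto_const_div_atTop_nhds_zero_nat (i : ℝ)).add_const 1
      rw [zero_add] at this
      refine this.congr' ?_
      filter_upwards [eventually_gt_atTop 0] with N hN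
      have : (N : ℝ) ≠ 0 := by positivity
      push_cast
      field_simp
    have h3 := h1.mul h2
    rw [zero_mul] at h3
    refine h3.congr' ?_
    filter_upwards [eventually_gt_atTop 0] with N hN
    have hN' : (N : ℝ) ≠ 0 := by positivity
    have : ((i + N : ℕ) : ℝ) ≠ 0 := by positivity
    field_simp
  rw [Metric.tendsto_atTop]
  intro δ hδ
  obtain ⟨ε, hε, hεδ⟩ : ∃ ε : ℝ, 0 < ε ∧ B * (4 * ε) < δ / 2 := by
    refine ⟨δ / (8 * (B + 1)) / 2, by positivity, ?_⟩
    have hB1 : 0 < B + 1 := by positivity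
    rw [show B * (4 * (δ / (8 * (B + 1)) / 2)) = δ / 2 * (B / (2 * (B + 1))) by field_simp; ring]
    have : B / (2 * (B + 1)) < 1 := by
      rw [div_lt_one (by positivity)]
      linarith
    nlinarith
  have hlim2 : Tendsto (fun N : ℕ => B / (4 * ε) * ((∑ i ∈ Finset.range k, u (i + N)) / N))
      atTop (𝓝 0) := by
    simpa using hlim.const_mul (B / (4 * ε))
  obtain ⟨N₀, hN₀⟩ := (Metric.tendsto_atTop.1 hlim2) (δ / 2) (by positivity)
  refine ⟨max N₀ 1, fun N hN => ?_⟩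
  have hN1 : 1 ≤ N := (le_max_right _ _).trans hN
  have hNpos : (0 : ℝ) < N := by exact_mod_cast hN1
  have h1 := hN₀ N ((le_max_left _ _).trans hN)
  rw [Real.dist_eq, sub_zero] at h1 ⊢
  have h2 : |∑ n ∈ Finset.range N, (∫ x, Φ x * ρ (n + k) x ∂P - ∫ x, Φ x * σ (n + k) x ∂P)|
      ≤ B / (4 * ε) * (∑ i ∈ Finset.range k, u (i + N)) + N * (B * (4 * ε)) := by
    calc _ ≤ ∑ n ∈ Finset.range N,
          |∫ x, Φ x * ρ (n + k) x ∂P - ∫ x, Φ x * σ (n + k) x ∂P| := Finset.abs_sum_le_sum_abs _ _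
      _ ≤ ∑ n ∈ Finset.range N,
          (B / (4 * ε) * ((e (n + k) - a (n + k)) - (e n - a n)) + B * (4 * ε)) := by
          refine Finset.sum_le_sum fun n _ => (hdiff ε hε n).trans (le_of_eq ?_)
          ring
      _ = B / (4 * ε) * ∑ n ∈ Finset.range N, ((e (n + k) - a (n + k)) - (e n - a n))
          + N * (B * (4 * ε)) := by
          rw [Finset.sum_add_distrib, ← Finset.mul_sum]
          simp
      _ ≤ _ := by
          gcongr
          exact htel N
  rw [abs_div, abs_of_pos hNpos, div_lt_iff₀ hNpos]
  have h3 := (le_abs_self _).trans_lt h1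
  rw [← mul_div_assoc, div_lt_iff₀ hNpos] at h3
  nlinarith

end QuasiInvariant

end Entropy

section SkewProduct

/-- The right shift on bi-infinite sequences. -/
def unshift (ω : ℤ → ℕ) : ℤ → ℕ := fun n => ω (n - 1)

lemma shift_iterate_apply (n : ℕ) (ω : ℤ → ℕ) (i : ℤ) : shift^[n] ω i = ω (i + n) := by
  induction n generalizing ω with
  | zero => simp
  | succ n ih =>
    rw [Function.iterate_succ_apply, ih, shift]
    push_cast
    ring_nf

lemma unshift_iterate_apply (n : ℕ) (ω : ℤ → ℕ) (i : ℤ) : unshift^[n] ω i = ω (i - n) := by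
  induction n generalizing ω with
  | zero => simp
  | succ n ih =>
    rw [Function.iterate_succ_apply, ih, unshift]
    push_cast
    ring_nf

lemma unshift_shift (ω : ℤ → ℕ) : unshift (shift ω) = ω := by
  funext n; simp [unshift, shift]

lemma shift_unshift (ω : ℤ → ℕ) : shift (unshift ω) = ω := by
  funext n; simp [unshift, shift]

lemma unshift_iterate_shift_iterate (n : ℕ) (ω : ℤ → ℕ) : unshift^[n] (shift^[n] ω) = ω :=
  Function.LeftInverse.iterate unshift_shift n ω

lemma measurable_shift : Measurable shift := measurable_pi_lambda _ fun _ => measurable_pi_apply _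

lemma measurable_unshift : Measurable unshift :=
  measurable_pi_lambda _ fun _ => measurable_pi_apply _

lemma measurable_projPlus : Measurable projPlus :=
  measurable_pi_lambda _ fun _ => measurable_pi_apply _

lemma measurable_projMinus : Measurable projMinus :=
  measurable_pi_lambda _ fun _ => measurable_pi_apply _

lemma projPlus_surjective : Function.Surjective projPlus := fun a =>
  ⟨fun n => a n.toNat, by funext n; simp [projPlus]⟩

/-- The sum of the absolute values of the entries of a `2 × 2` matrix. -/
noncomputable def entrySum (M : Matrix (Fin 2) (Fin 2) ℝ) : ℝ := ∑ i, ∑ j, |M i j|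

lemma entrySum_eq (M : Matrix (Fin 2) (Fin 2) ℝ) :
    entrySum M = |M 0 0| + |M 0 1| + (|M 1 0| + |M 1 1|) := by
  simp [entrySum, Fin.sum_univ_two]

lemma entrySum_nonneg (M : Matrix (Fin 2) (Fin 2) ℝ) : 0 ≤ entrySum M := by
  rw [entrySum_eq]; positivity

lemma entrySum_mul_le (M N : Matrix (Fin 2) (Fin 2) ℝ) :
    entrySum (M * N) ≤ entrySum M * entrySum N := by
  simp only [entrySum_eq, Matrix.mul_apply, Fin.sum_univ_two]
  have h : ∀ a b c d : ℝ, |a * b + c * d| ≤ |a| * |b| + |c| * |d| := fun a b c d => by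
    rw [← abs_mul, ← abs_mul]; exact abs_add_le _ _
  have p : ∀ i j k l : Fin 2, 0 ≤ |M i j| * |N k l| := fun i j k l => by positivity
  linear_combination h (M 0 0) (N 0 0) (M 0 1) (N 1 0) + h (M 0 0) (N 0 1) (M 0 1) (N 1 1)
    + h (M 1 0) (N 0 0) (M 1 1) (N 1 0) + h (M 1 0) (N 0 1) (M 1 1) (N 1 1)
    + p 0 0 1 0 + p 0 0 1 1 + p 0 1 0 0 + p 0 1 0 1 + p 1 0 1 0 + p 1 0 1 1 + p 1 1 0 0 + p 1 1 0 1

lemma one_le_entrySum {M : Matrix (Fin 2) (Fin 2) ℝ} (hM : M.det = 1) : 1 ≤ entrySum M := by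
  rw [entrySum_eq]
  rw [Matrix.det_fin_two] at hM
  have h1 := le_abs_self (M 0 0 * M 1 1)
  have h2 := neg_abs_le (M 0 1 * M 1 0)
  rw [abs_mul] at h1 h2
  have := abs_nonneg (M 0 0)
  have := abs_nonneg (M 0 1)
  have := abs_nonneg (M 1 0)
  have := abs_nonneg (M 1 1)
  by_contra! hlt
  nlinarith [mul_nonneg (abs_nonneg (M 0 0)) (abs_nonneg (M 1 1)),
    mul_nonneg (abs_nonneg (M 0 1)) (abs_nonneg (M 1 0))]

lemma entrySum_adjugate (M : Matrix (Fin 2) (Fin 2) ℝ) : entrySum M.adjugate = entrySum M := by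
  simp [entrySum_eq, Matrix.adjugate_fin_two]
  ring

lemma norm_mulVec_le_entrySum (M : Matrix (Fin 2) (Fin 2) ℝ) (x : Fin 2 → ℝ) :
    ‖M *ᵥ x‖ ≤ entrySum M * ‖x‖ := by
  rw [pi_norm_le_iff_of_nonneg (mul_nonneg (entrySum_nonneg M) (norm_nonneg x))]
  intro i
  have h0 := norm_le_pi_norm x 0
  have h1 := norm_le_pi_norm x 1
  rw [Real.norm_eq_abs] at h0 h1 ⊢
  have : |(M *ᵥ x) i| ≤ |M i 0| * ‖x‖ + |M i 1| * ‖x‖ := by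
    simp only [Matrix.mulVec, dotProduct, Fin.sum_univ_two]
    refine (abs_add_le _ _).trans ?_
    rw [abs_mul, abs_mul]
    gcongr
  refine this.trans ?_
  rw [← add_mul]
  gcongr
  rw [entrySum_eq]
  fin_cases i <;> simp <;> positivity

/-- The product of the matrices attached to the letters `ω 0, …, ω (n - 1)`. -/
noncomputable def wordProd (G : ℕ → Matrix (Fin 2) (Fin 2) ℝ) (ω : ℤ → ℕ) :
    ℕ → Matrix (Fin 2) (Fin 2) ℝ
  | 0 => 1
  | n + 1 => G (ω n) * wordProd G ω n

variable {G : ℕ → Matrix (Fin 2) (Fin 2) ℝ}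

lemma det_wordProd (hdet : ∀ b, (G b).det = 1) (ω : ℤ → ℕ) (n : ℕ) :
    (wordProd G ω n).det = 1 := by
  induction n with
  | zero => simp [wordProd]
  | succ n ih => simp [wordProd, hdet, ih]

lemma exists_entrySum_wordProd_le (hG : ∃ K, ∀ b, entrySum (G b) ≤ K) (n : ℕ) :
    ∃ K, ∀ ω, entrySum (wordProd G ω n) ≤ K := by
  obtain ⟨K, hK⟩ := hG
  induction n with
  | zero => exact ⟨entrySum 1, fun ω => le_rfl⟩
  | succ n ih =>
    obtain ⟨D, hD⟩ := ih
    refine ⟨K * D, fun ω => (entrySum_mul_le _ _).trans ?_⟩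
    exact mul_le_mul (hK _) (hD ω) (entrySum_nonneg _) ((entrySum_nonneg _).trans (hK 0))

lemma wordProd_congr {ω ω' : ℤ → ℕ} {n : ℕ} (h : ∀ i : ℕ, i < n → ω i = ω' i) :
    wordProd G ω n = wordProd G ω' n := by
  induction n with
  | zero => rfl
  | succ n ih => rw [wordProd, wordProd, h n n.lt_succ_self, ih fun i hi => h i (hi.trans n.lt_succ_self)]

lemma measurable_wordProd_apply (n : ℕ) (i j : Fin 2) :
    Measurable fun ω : ℤ → ℕ => wordProd G ω n i j := by
  induction n generalizing i j with
  | zero => exact measurable_const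
  | succ n ih =>
    simp only [wordProd, Matrix.mul_apply, Fin.sum_univ_two]
    have h : ∀ l, Measurable fun ω : ℤ → ℕ => G (ω n) i l := fun l =>
      (measurable_from_nat (f := fun b => G b i l)).comp (measurable_pi_apply _)
    exact ((h 0).mul (ih 0 j)).add ((h 1).mul (ih 1 j))

lemma measurable_mulVec {E : Type*} [MeasurableSpace E] {M : E → Matrix (Fin 2) (Fin 2) ℝ}
    (hM : ∀ i j, Measurable fun e => M e i j) {x : E → Fin 2 → ℝ} (hx : Measurable x) :
    Measurable fun e => M e *ᵥ x e := by
  refine measurable_pi_lambda _ fun i => ?_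
  simp only [Matrix.mulVec, dotProduct, Fin.sum_univ_two]
  have h : ∀ l, Measurable fun e => x e l := fun l => (measurable_pi_apply l).comp hx
  exact ((hM i 0).mul (h 0)).add ((hM i 1).mul (h 1))

lemma measurable_letter_mulVec (H : ℕ → Matrix (Fin 2) (Fin 2) ℝ) (n : ℤ) :
    Measurable fun e : (ℤ → ℕ) × (Fin 2 → ℝ) => H (e.1 n) *ᵥ e.2 :=
  measurable_mulVec (fun i j => (measurable_from_nat (f := fun b => H b i j)).comp
    ((measurable_pi_apply n).comp measurable_fst)) measurable_snd

lemma adjugate_mulVec_mulVec {M : Matrix (Fin 2) (Fin 2) ℝ} (hM : M.det = 1) (x : Fin 2 → ℝ) :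
    M.adjugate *ᵥ (M *ᵥ x) = x := by
  rw [Matrix.mulVec_mulVec, Matrix.adjugate_mul, hM, one_smul, Matrix.one_mulVec]

lemma mulVec_adjugate_mulVec {M : Matrix (Fin 2) (Fin 2) ℝ} (hM : M.det = 1) (x : Fin 2 → ℝ) :
    M *ᵥ (M.adjugate *ᵥ x) = x := by
  rw [Matrix.mulVec_mulVec, Matrix.mul_adjugate, hM, one_smul, Matrix.one_mulVec]

/-- The linear skew product over the shift defined by a one-step cocycle. -/
noncomputable def skewEquiv (hdet : ∀ b, (G b).det = 1) :
    ((ℤ → ℕ) × (Fin 2 → ℝ)) ≃ᵐ ((ℤ → ℕ) × (Fin 2 → ℝ)) where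
  toFun e := (shift e.1, G (e.1 0) *ᵥ e.2)
  invFun e := (unshift e.1, (G (e.1 (-1))).adjugate *ᵥ e.2)
  left_inv e := by
    refine Prod.ext (unshift_shift _) ?_
    simpa [shift] using adjugate_mulVec_mulVec (hdet _) e.2
  right_inv e := by
    refine Prod.ext (shift_unshift _) ?_
    simpa [unshift] using mulVec_adjugate_mulVec (hdet _) e.2
  measurable_toFun := (measurable_shift.comp measurable_fst).prodMk (measurable_letter_mulVec G 0)
  measurable_invFun := (measurable_unshift.comp measurable_fst).prodMk
    (measurable_letter_mulVec (fun b => (G b).adjugate) (-1))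

variable {hdet : ∀ b, (G b).det = 1}

lemma skewEquiv_apply (e : (ℤ → ℕ) × (Fin 2 → ℝ)) :
    skewEquiv hdet e = (shift e.1, G (e.1 0) *ᵥ e.2) := rfl

lemma skewEquiv_iterate (n : ℕ) (e : (ℤ → ℕ) × (Fin 2 → ℝ)) :
    (skewEquiv hdet)^[n] e = (shift^[n] e.1, wordProd G e.1 n *ᵥ e.2) := by
  induction n with
  | zero => simp [wordProd]
  | succ n ih =>
    rw [Function.iterate_succ_apply', ih, skewEquiv_apply, Function.iterate_succ_apply', wordProd]
    simp only [shift_iterate_apply n e.1 0, zero_add, Matrix.mulVec_mulVec]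

lemma skewEquiv_iterate_symm (n : ℕ) (e : (ℤ → ℕ) × (Fin 2 → ℝ)) :
    (skewEquiv hdet)^[n] ((skewEquiv hdet).symm^[n] e) = e :=
  Function.LeftInverse.iterate (skewEquiv hdet).apply_symm_apply n e

/-- The normalizing constant of `confDensity`. -/
noncomputable def confMass : ℝ := ∫ x : Fin 2 → ℝ, ((1 + ‖x‖) ^ 3)⁻¹

/-- A probability density on the plane decaying polynomially. -/
noncomputable def confDensity (x : Fin 2 → ℝ) : ℝ := ((1 + ‖x‖) ^ 3)⁻¹ / confMass

lemma integrable_inv_one_add_norm_pow : Integrable fun x : Fin 2 → ℝ => ((1 + ‖x‖) ^ 3)⁻¹ := by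
  have h := integrable_one_add_norm (E := Fin 2 → ℝ) (μ := volume) (r := 3) (by simp; norm_num)
  refine h.congr (ae_of_all _ fun x => ?_)
  have : (0 : ℝ) ≤ 1 + ‖x‖ := by positivity
  simp only [rpow_neg this]
  norm_cast

lemma confMass_pos : 0 < confMass := by
  unfold confMass
  rw [integral_pos_iff_support_of_nonneg (fun x => by positivity) integrable_inv_one_add_norm_pow]
  have : (Function.support fun x : Fin 2 → ℝ => ((1 + ‖x‖) ^ 3)⁻¹) = univ := by
    ext x
    simp only [Function.mem_support, mem_univ, iff_true]
    positivity
  simp [this]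

lemma confDensity_pos (x : Fin 2 → ℝ) : 0 < confDensity x := by
  have := confMass_pos
  unfold confDensity
  positivity

lemma measurable_confDensity : Measurable confDensity := by
  unfold confDensity; fun_prop

lemma integral_confDensity : ∫ x, confDensity x = 1 := by
  unfold confDensity
  rw [integral_div]
  exact div_self confMass_pos.ne'

/-- The probability measure with density `confDensity`. -/
noncomputable def confMeasure : Measure (Fin 2 → ℝ) :=
  volume.withDensity fun x => ENNReal.ofReal (confDensity x)

instance : IsProbabilityMeasure confMeasure := by
  refine ⟨?_⟩
  rw [confMeasure, withDensity_apply _ MeasurableSet.univ, Measure.restrict_univ,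
    ← ofReal_integral_eq_lintegral_ofReal (f := confDensity)
      (integrable_inv_one_add_norm_pow.div_const _)
      (ae_of_all _ fun x => (confDensity_pos x).le)]
  rw [integral_confDensity, ENNReal.ofReal_one]

lemma confDensity_div (x y : Fin 2 → ℝ) :
    confDensity x / confDensity y = ((1 + ‖y‖) / (1 + ‖x‖)) ^ 3 := by
  have := confMass_pos.ne'
  unfold confDensity
  field_simp

lemma confDensity_div_le {M : Matrix (Fin 2) (Fin 2) ℝ} {K : ℝ} (hK : 1 ≤ K) (hM : entrySum M ≤ K)
    (x : Fin 2 → ℝ) : confDensity x / confDensity (M *ᵥ x) ≤ K ^ 3 := by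
  rw [confDensity_div]
  gcongr
  rw [div_le_iff₀ (by positivity)]
  have := norm_mulVec_le_entrySum M x
  have := mul_le_mul_of_nonneg_right hM (norm_nonneg x)
  linarith

/-- The density of the `n`-th iterate of the skew product with respect to `μ.prod confMeasure`. -/
noncomputable def skewDensity (hdet : ∀ b, (G b).det = 1) (n : ℕ)
    (e : (ℤ → ℕ) × (Fin 2 → ℝ)) : ℝ :=
  confDensity ((skewEquiv hdet).symm^[n] e).2 / confDensity e.2

lemma skewDensity_iterate (n : ℕ) (e : (ℤ → ℕ) × (Fin 2 → ℝ)) :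
    skewDensity hdet n ((skewEquiv hdet)^[n] e) =
      confDensity e.2 / confDensity (wordProd G e.1 n *ᵥ e.2) := by
  rw [skewDensity, QuasiInvariant.symm_iterate_iterate, skewEquiv_iterate]

lemma measurable_skewDensity (n : ℕ) : Measurable (skewDensity hdet n) :=
  (measurable_confDensity.comp
    (measurable_snd.comp ((skewEquiv hdet).symm.measurable.iterate n))).div
    (measurable_confDensity.comp measurable_snd)

lemma pinched_skewDensity (hG : ∃ K, ∀ b, entrySum (G b) ≤ K) (n : ℕ) :
    Pinched (skewDensity hdet n) := by
  refine ⟨measurable_skewDensity n, ?_⟩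
  obtain ⟨K, hK⟩ := exists_entrySum_wordProd_le hG n
  have hK1 : 1 ≤ K := (one_le_entrySum (det_wordProd hdet 0 n)).trans (hK 0)
  refine ⟨K ^ 3, by positivity, fun e => ?_⟩
  obtain ⟨e, rfl⟩ : ∃ e', e = (skewEquiv hdet)^[n] e' := ⟨_, (skewEquiv_iterate_symm n e).symm⟩
  rw [skewDensity_iterate]
  refine ⟨?_, confDensity_div_le hK1 (hK _) _⟩
  rw [inv_le_comm₀ (by positivity) (div_pos (confDensity_pos _) (confDensity_pos _)), inv_div]
  have := confDensity_div_le (M := (wordProd G e.1 n).adjugate) hK1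
    ((entrySum_adjugate _).trans_le (hK e.1)) (wordProd G e.1 n *ᵥ e.2)
  rwa [adjugate_mulVec_mulVec (det_wordProd hdet _ n)] at this

lemma measurePreserving_skewEquiv {μ : Measure (ℤ → ℕ)} [SFinite μ]
    (hμ : MeasurePreserving shift μ μ) :
    MeasurePreserving (skewEquiv hdet) (μ.prod volume) (μ.prod volume) := by
  refine hμ.skew_product (g := fun ω x => G (ω 0) *ᵥ x) (measurable_letter_mulVec G 0)
    (ae_of_all _ fun ω => ?_)
  have h := Real.map_matrix_volume_pi_eq_smul_volume_pi (M := G (ω 0)) (by simp [hdet])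
  rw [hdet] at h
  simp only [inv_one, abs_one, ENNReal.ofReal_one, one_smul] at h
  exact h

lemma measurableEmbedding_iterate {E : Type*} [MeasurableSpace E] (F : E ≃ᵐ E) (n : ℕ) :
    MeasurableEmbedding (F^[n]) := by
  induction n with
  | zero => exact MeasurableEmbedding.id
  | succ n ih => exact ih.comp F.measurableEmbedding

lemma prod_confMeasure {μ : Measure (ℤ → ℕ)} [SFinite μ] : μ.prod confMeasure =
    (μ.prod volume).withDensity fun e => ENNReal.ofReal (confDensity e.2) :=
  prod_withDensity_right measurable_confDensity.ennreal_ofReal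

variable {μ : Measure (ℤ → ℕ)} [IsProbabilityMeasure μ]

lemma integral_prod_confMeasure (Φ : (ℤ → ℕ) × (Fin 2 → ℝ) → ℝ) :
    ∫ e, Φ e ∂(μ.prod confMeasure) = ∫ e, confDensity e.2 * Φ e ∂(μ.prod volume) := by
  have hm : Measurable fun e : (ℤ → ℕ) × (Fin 2 → ℝ) => ENNReal.ofReal (confDensity e.2) :=
    (measurable_confDensity.comp measurable_snd).ennreal_ofReal
  rw [prod_confMeasure, integral_withDensity_eq_integral_toReal_smul hm
    (ae_of_all _ fun _ => ENNReal.ofReal_lt_top)]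
  simp [ENNReal.toReal_ofReal (confDensity_pos _).le]

lemma integral_skewEquiv_iterate (hμ : MeasurePreserving shift μ μ) (n : ℕ)
    (Φ : (ℤ → ℕ) × (Fin 2 → ℝ) → ℝ) :
    ∫ e, Φ ((skewEquiv hdet)^[n] e) ∂(μ.prod confMeasure) =
      ∫ e, Φ e * skewDensity hdet n e ∂(μ.prod confMeasure) := by
  rw [integral_prod_confMeasure, integral_prod_confMeasure]
  refine Eq.trans ?_ (((measurePreserving_skewEquiv (hdet := hdet) hμ).iterate n).integral_comp
      (measurableEmbedding_iterate _ n) _)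
  congr 1
  funext e
  rw [skewDensity_iterate, skewEquiv_iterate]
  have := (confDensity_pos (wordProd G e.1 n *ᵥ e.2)).ne'
  field_simp

/-- Forgetting the strictly negative coordinates of the base point. -/
def futureProj (e : (ℤ → ℕ) × (Fin 2 → ℝ)) : (ℕ → ℕ) × (Fin 2 → ℝ) := (projPlus e.1, e.2)

lemma measurable_futureProj : Measurable futureProj :=
  (measurable_projPlus.comp measurable_fst).prodMk measurable_snd

lemma measurable_comap_futureProj {Z : Type*} [MeasurableSpace Z]
    {Φ : (ℤ → ℕ) × (Fin 2 → ℝ) → Z} (Φ' : (ℕ → ℕ) × (Fin 2 → ℝ) → Z) (hΦ' : Measurable Φ')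
    (h : ∀ e, Φ e = Φ' (futureProj e)) :
    Measurable[MeasurableSpace.comap futureProj inferInstance] Φ := by
  rw [funext h]
  exact hΦ'.comp (comap_measurable futureProj)

/-- Extending a one-sided sequence to a two-sided one. -/
def extendPast (a : ℕ → ℕ) : ℤ → ℕ := fun n => a n.toNat

lemma measurable_extendPast : Measurable extendPast :=
  measurable_pi_lambda _ fun _ => measurable_pi_apply _

lemma wordProd_extendPast (ω : ℤ → ℕ) (n : ℕ) :
    wordProd G (extendPast (projPlus ω)) n = wordProd G ω n :=
  wordProd_congr fun i _ => by simp [extendPast, projPlus]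

lemma quasiInvariant_skewEquiv (hμ : MeasurePreserving shift μ μ)
    (hG : ∃ K, ∀ b, entrySum (G b) ≤ K) :
    QuasiInvariant (MeasurableSpace.comap futureProj inferInstance) (μ.prod confMeasure)
      (skewEquiv hdet) (skewDensity hdet) where
  le := measurable_futureProj.comap_le
  pinched := pinched_skewDensity hG
  cocycle n k e := by
    have h := (confDensity_pos ((skewEquiv hdet).symm^[k] e).2).ne'
    simp only [skewDensity, Function.iterate_add_apply]
    field_simp
  transfer n Φ _ := integral_skewEquiv_iterate hμ n Φ
  measurable := by
    rw [measurable_comap_iff]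
    refine measurable_comap_futureProj
      (fun c => futureProj (shift (extendPast c.1), G (c.1 0) *ᵥ c.2)) ?_ fun e => ?_
    · refine measurable_futureProj.comp (Measurable.prodMk ?_ ?_)
      · exact measurable_shift.comp (measurable_extendPast.comp measurable_fst)
      · exact measurable_mulVec (fun i j => (measurable_from_nat (f := fun b => G b i j)).comp
          ((measurable_pi_apply 0).comp measurable_fst)) measurable_snd
    · refine Prod.ext (funext fun n => ?_) ?_
      · simp only [Function.comp, skewEquiv_apply, futureProj, projPlus, shift, extendPast]
        congr 1
      · simp [skewEquiv_apply, futureProj, projPlus]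
  adapted k := by
    refine measurable_comap_futureProj
      (fun c => confDensity c.2 / confDensity (wordProd G (extendPast c.1) k *ᵥ c.2)) ?_ fun e => ?_
    · refine (measurable_confDensity.comp measurable_snd).div (measurable_confDensity.comp ?_)
      exact measurable_mulVec (fun i j => (measurable_wordProd_apply k i j).comp
        (measurable_extendPast.comp measurable_fst)) measurable_snd
    · rw [skewDensity_iterate]
      simp only [futureProj, wordProd_extendPast]

/-- The correlation of a base observable at time `n` with a fibre observable at time `n`. -/
noncomputable def fibreMean (G : ℕ → Matrix (Fin 2) (Fin 2) ℝ) (μ : Measure (ℤ → ℕ)) (n : ℕ)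
    (h : (ℤ → ℕ) → ℝ) (f : (Fin 2 → ℝ) → ℝ) : ℝ :=
  ∫ e, h (shift^[n] e.1) * f (wordProd G e.1 n *ᵥ e.2) ∂(μ.prod confMeasure)

lemma fibreMean_eq (hμ : MeasurePreserving shift μ μ) (hdet : ∀ b, (G b).det = 1) (n : ℕ)
    (h : (ℤ → ℕ) → ℝ) (f : (Fin 2 → ℝ) → ℝ) :
    fibreMean G μ n h f =
      ∫ e, (h e.1 * f e.2) * skewDensity hdet n e ∂(μ.prod confMeasure) := by
  rw [← integral_skewEquiv_iterate hμ n (fun e => h e.1 * f e.2), fibreMean]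
  simp only [skewEquiv_iterate]

/-- If the cocycle grows subexponentially, conditioning a base observable on the future does not
change its asymptotic correlations with fibre observables. -/
theorem cesaro_fibreMean_sub (hμ : MeasurePreserving shift μ μ) (hdet : ∀ b, (G b).det = 1)
    (hG : ∃ K, ∀ b, entrySum (G b) ≤ K)
    (hgrowth : Tendsto (fun N : ℕ => (∫ ω, log (entrySum (wordProd G ω N)) ∂μ) / N) atTop (𝓝 0))
    (k : ℕ) {h u : (ℕ → ℕ) → ℝ} (hh : BddMeasurable h) (hu : BddMeasurable u)
    (hhu : ∀ v : (ℕ → ℕ) → ℝ, BddMeasurable v →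
      ∫ ω, h (projPlus (unshift^[k] ω)) * v (projPlus ω) ∂μ =
        ∫ ω, u (projPlus ω) * v (projPlus ω) ∂μ)
    {f : (Fin 2 → ℝ) → ℝ} (hf : BddMeasurable f) :
    Tendsto (fun N : ℕ => (∑ n ∈ Finset.range N,
      (fibreMean G μ (n + k) (fun ω => h (projPlus (unshift^[k] ω))) f -
        fibreMean G μ (n + k) (fun ω => u (projPlus ω)) f)) / N) atTop (𝓝 0) := by
  have hQ := quasiInvariant_skewEquiv (hdet := hdet) hμ hG
  have hlogm : ∀ N, BddMeasurable fun ω => log (entrySum (wordProd G ω N)) := fun N => by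
    obtain ⟨K, hK⟩ := exists_entrySum_wordProd_le hG N
    refine ⟨?_, log K, fun ω => ?_⟩
    · refine Measurable.log ?_
      simp only [entrySum_eq]
      have := measurable_wordProd_apply (G := G) N
      fun_prop
    · have h1 := one_le_entrySum (det_wordProd hdet ω N)
      rw [abs_of_nonneg (log_nonneg h1)]
      exact log_le_log (by linarith) (hK ω)
  obtain ⟨σ, hσ, hlim⟩ := hQ.cesaro_sub_condExp
    (fun N => 3 * ∫ ω, log (entrySum (wordProd G ω N)) ∂μ) (fun N => by
      calc ∫ e, log (skewDensity hdet N ((skewEquiv hdet)^[N] e)) ∂(μ.prod confMeasure)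
          ≤ ∫ e, 3 * log (entrySum (wordProd G e.1 N)) ∂(μ.prod confMeasure) := by
            refine integral_mono ((pinched_skewDensity hG N).log.comp
              ((skewEquiv hdet).measurable.iterate N) |>.integrable _)
              ((((BddMeasurable.const 3).mul (hlogm N)).comp measurable_fst).integrable _)
              fun e => ?_
            simp only [skewDensity_iterate]
            refine (log_le_log (div_pos (confDensity_pos _) (confDensity_pos _))
              (confDensity_div_le (one_le_entrySum (det_wordProd hdet e.1 N)) le_rfl _)).trans ?_
            rw [log_pow]
            norm_num
        _ = 3 * ∫ ω, log (entrySum (wordProd G ω N)) ∂μ := by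
            rw [integral_const_mul, integral_fun_fst
              (f := fun ω => log (entrySum (wordProd G ω N)))]
            simp)
    (by simpa [mul_div_assoc] using hgrowth.const_mul 3)
  have hk : BddMeasurable fun ω => h (projPlus (unshift^[k] ω)) :=
    hh.comp (measurable_projPlus.comp (measurable_unshift.iterate k))
  have hup : BddMeasurable fun ω => u (projPlus ω) := hu.comp measurable_projPlus
  have key := hlim k (fun e => h (projPlus (unshift^[k] e.1)) * f e.2)
    ((hk.comp measurable_fst).mul (hf.comp measurable_snd)) (by
      refine measurable_comap_futureProj
        (fun c => h c.1 * f (wordProd G (extendPast c.1) k *ᵥ c.2)) ?_ fun e => ?_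
      · refine (hh.1.comp measurable_fst).mul (hf.1.comp ?_)
        exact measurable_mulVec (fun i j => (measurable_wordProd_apply k i j).comp
          (measurable_extendPast.comp measurable_fst)) measurable_snd
      · simp only [skewEquiv_iterate, futureProj, wordProd_extendPast,
          unshift_iterate_shift_iterate])
  refine key.congr fun N => ?_
  congr 1
  refine Finset.sum_congr rfl fun n _ => ?_
  rw [fibreMean_eq hμ hdet, fibreMean_eq hμ hdet]
  congr 1
  obtain ⟨hσm, hσp, hσi⟩ := hσ (n + k)
  rw [← hσi (fun e => u (projPlus e.1) * f e.2)
    (measurable_comap_futureProj (fun c => u c.1 * f c.2)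
      ((hu.1.comp measurable_fst).mul (hf.1.comp measurable_snd)) fun _ => rfl)
    ((hup.comp measurable_fst).mul (hf.comp measurable_snd))]
  obtain ⟨r, hr, hσr⟩ := hσm.exists_eq_measurable_comp
  have hrb : ∀ x, BddMeasurable fun a => f x * r (a, x) := fun x => by
    refine (BddMeasurable.const _).mul ⟨hr.comp measurable_prodMk_right, ?_⟩
    obtain ⟨C, hC⟩ := hσp.bdd.2
    refine ⟨C, fun a => ?_⟩
    obtain ⟨ω, rfl⟩ := projPlus_surjective a
    simpa [hσr, futureProj] using hC (ω, x)
  have hint : ∀ w : (ℤ → ℕ) → ℝ, BddMeasurable w →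
      ∫ e, (w e.1 * f e.2) * σ (n + k) e ∂(μ.prod confMeasure) =
        ∫ x, ∫ ω, w ω * (f x * r (projPlus ω, x)) ∂μ ∂confMeasure := fun w hw => by
    rw [integral_prod_symm _ ((((hw.comp measurable_fst).mul (hf.comp measurable_snd)).mul
      hσp.bdd).integrable _)]
    simp only [hσr, Function.comp, futureProj, mul_assoc]
  rw [hint _ hk, hint _ hup]
  congr 1
  funext x
  exact hhu _ (hrb x)

end SkewProduct

section WeakLimits

/-- Uniformly bounded functions converge weakly along an ultrafilter. -/
lemma exists_weak_limit {E : Type*} [MeasurableSpace E] (P : Measure E) [IsProbabilityMeasure P]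
    (U : Ultrafilter ℕ) {η : ℕ → E → ℝ} (hη : ∀ N, Measurable (η N)) {C : ℝ}
    (hC : ∀ N x, |η N x| ≤ C) :
    ∃ ξ : E → ℝ, Integrable ξ P ∧ ∀ h : E → ℝ, BddMeasurable h →
      Tendsto (fun N => ∫ x, h x * η N x ∂P) U (𝓝 (∫ x, h x * ξ x ∂P)) := by
  have hL2 : ∀ {g : E → ℝ}, BddMeasurable g → MemLp g 2 P := fun {g} hg => by
    obtain ⟨D, hD⟩ := hg.2
    exact MemLp.of_bound hg.1.aestronglyMeasurable D (ae_of_all _ hD)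
  have hηL : ∀ N, MemLp (η N) 2 P := fun N => hL2 ⟨hη N, C, hC N⟩
  have hC0 : 0 ≤ C := by
    obtain ⟨x⟩ := P.nonempty_of_neZero
    exact (abs_nonneg _).trans (hC 0 x)
  let dual : ℕ → WeakDual ℝ (Lp ℝ 2 P) := fun N =>
    StrongDual.toWeakDual (InnerProductSpace.toDual ℝ (Lp ℝ 2 P) ((hηL N).toLp _))
  have hball : ∀ N, dual N ∈ WeakDual.toStrongDual ⁻¹'
      Metric.closedBall (0 : StrongDual ℝ (Lp ℝ 2 P)) C := fun N => by
    rw [mem_preimage, mem_closedBall_zero_iff]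
    change ‖InnerProductSpace.toDual ℝ (Lp ℝ 2 P) ((hηL N).toLp _)‖ ≤ C
    rw [LinearIsometryEquiv.norm_map]
    refine (Lp.norm_le_of_ae_bound hC0 (C := C) ?_).trans (by simp [measureUnivNNReal])
    filter_upwards [(hηL N).coeFn_toLp] with x hx
    rw [hx]
    exact hC N x
  obtain ⟨L, -, hL⟩ := (WeakDual.isCompact_closedBall (0 : StrongDual ℝ (Lp ℝ 2 P)) C)
    |>.ultrafilter_le_nhds (U.map dual) (by
      rw [le_principal_iff]
      exact Filter.mem_map.2 (Filter.mem_of_superset univ_mem fun N _ => hball N))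
  refine ⟨(InnerProductSpace.toDual ℝ (Lp ℝ 2 P)).symm (WeakDual.toStrongDual L),
    (Lp.memLp _).integrable (by norm_num), fun h hh => ?_⟩
  have hpair : ∀ g : Lp ℝ 2 P, inner ℝ g ((hL2 hh).toLp h) = ∫ x, h x * g x ∂P := fun g => by
    rw [L2.inner_def]
    refine integral_congr_ae ?_
    filter_upwards [(hL2 hh).coeFn_toLp] with x hx
    simp [hx]
  have hlim : Tendsto (fun N => dual N ((hL2 hh).toLp h)) U (𝓝 (L ((hL2 hh).toLp h))) :=
    (WeakDual.eval_continuous ((hL2 hh).toLp h)).continuousAt.tendsto.comp hL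
  rw [← hpair, InnerProductSpace.toDual_symm_apply]
  refine hlim.congr fun N => ?_
  change inner ℝ ((hηL N).toLp (η N)) ((hL2 hh).toLp h) = _
  rw [hpair]
  refine integral_congr_ae ?_
  filter_upwards [(hηL N).coeFn_toLp] with x hx
  rw [hx]

section CondExp

variable {E : Type*} {𝒢 : MeasurableSpace E} [mE : MeasurableSpace E] {P : Measure E}

lemma integrable_bdd_mul {h g : E → ℝ} (hh : BddMeasurable h) (hg : Integrable g P) :
    Integrable (fun x => h x * g x) P := by
  obtain ⟨C, hC⟩ := hh.2
  exact hg.bdd_mul hh.1.aestronglyMeasurable (ae_of_all _ hC)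

lemma setIntegral_eq_integral_indicator_mul {s : Set E} (hs : MeasurableSet s) (g : E → ℝ) :
    ∫ x in s, g x ∂P = ∫ x, s.indicator (fun _ => (1 : ℝ)) x * g x ∂P := by
  rw [← integral_indicator hs]
  congr 1
  funext x
  by_cases hx : x ∈ s <;> simp [hx]

lemma bddMeasurable_indicator_one {s : Set E} (hs : MeasurableSet s) :
    BddMeasurable (s.indicator fun _ => (1 : ℝ)) :=
  ⟨measurable_const.indicator hs, 1, fun x => by by_cases hx : x ∈ s <;> simp [hx]⟩

variable [IsProbabilityMeasure P]

/-- A bounded version of the conditional expectation of a bounded function. -/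
lemma exists_bdd_condExp (h𝒢 : 𝒢 ≤ mE) {h : E → ℝ} (hh : BddMeasurable h) :
    ∃ σ : E → ℝ, Measurable[𝒢] σ ∧ BddMeasurable σ ∧ σ =ᵐ[P] P[h|𝒢] := by
  obtain ⟨C, hC⟩ := hh.2
  have hm : Measurable[𝒢] fun x => max (-C) (min C ((P[h|𝒢]) x)) :=
    measurable_const.max (measurable_const.min stronglyMeasurable_condExp.measurable)
  refine ⟨_, hm, ⟨hm.mono h𝒢 le_rfl, C, fun x => ?_⟩, ?_⟩
  · have := (abs_nonneg _).trans (hC x)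
    exact abs_le.2 ⟨le_max_left _ _, max_le (by linarith) (min_le_left _ _)⟩
  · have h1 := condExp_mono (m := 𝒢) (integrable_const (μ := P) (-C)) (hh.integrable P)
        (ae_of_all _ fun x => (abs_le.1 (hC x)).1)
    have h2 := condExp_mono (m := 𝒢) (hh.integrable P) (integrable_const (μ := P) C)
        (ae_of_all _ fun x => (abs_le.1 (hC x)).2)
    rw [condExp_const h𝒢] at h1 h2
    filter_upwards [h1, h2] with x h1 h2
    rw [min_eq_right h2, max_eq_right h1]

lemma integral_condExp_mul (h𝒢 : 𝒢 ≤ mE) {h σ g : E → ℝ} (hh : BddMeasurable h)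
    (hσ : σ =ᵐ[P] P[h|𝒢]) (hg : Measurable[𝒢] g) (hgi : Integrable g P) :
    ∫ x, σ x * g x ∂P = ∫ x, h x * g x ∂P := by
  rw [← integral_condExp h𝒢 (f := fun x => h x * g x)]
  refine integral_congr_ae ?_
  have := condExp_mul_of_stronglyMeasurable_right (m := 𝒢) (μ := P) hg.stronglyMeasurable
    (integrable_bdd_mul hh hgi) (hh.integrable P)
  filter_upwards [this, hσ] with x h1 h2
  rw [h2]
  exact h1.symm

lemma integral_mul_condExp (h𝒢 : 𝒢 ≤ mE) {σ g : E → ℝ} (hσm : Measurable[𝒢] σ)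
    (hσ : BddMeasurable σ) (hg : Integrable g P) :
    ∫ x, σ x * (P[g|𝒢]) x ∂P = ∫ x, σ x * g x ∂P := by
  rw [← integral_condExp h𝒢 (f := fun x => σ x * g x)]
  exact integral_congr_ae (condExp_mul_of_stronglyMeasurable_left (m := 𝒢) (μ := P)
    hσm.stronglyMeasurable (integrable_bdd_mul hσ hg) hg).symm

lemma integral_mul_sub_condExp_eq_zero (h𝒢 : 𝒢 ≤ mE) {η h : E → ℝ} (hη : Integrable η P)
    (hh : BddMeasurable h)
    (H : ∀ σ, Measurable[𝒢] σ → BddMeasurable σ → σ =ᵐ[P] P[h|𝒢] →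
      ∫ x, h x * η x ∂P = ∫ x, σ x * η x ∂P) :
    ∫ x, h x * (η x - (P[η|𝒢]) x) ∂P = 0 := by
  obtain ⟨σ, hσm, hσb, hσ⟩ := exists_bdd_condExp (P := P) h𝒢 hh
  simp only [mul_sub]
  rw [integral_sub (integrable_bdd_mul hh hη) (integrable_bdd_mul hh integrable_condExp),
    H σ hσm hσb hσ, ← integral_mul_condExp h𝒢 hσm hσb hη,
    integral_condExp_mul h𝒢 hh hσ stronglyMeasurable_condExp.measurable integrable_condExp, sub_self]

/-- An integrable function orthogonal to all `h - P[h|𝒢]` equals its conditional expectation. -/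
lemma ae_eq_condExp_of_forall_integral (h𝒢 : 𝒢 ≤ mE) {η : E → ℝ} (hη : Integrable η P)
    (H : ∀ h σ, BddMeasurable h → Measurable[𝒢] σ → BddMeasurable σ → σ =ᵐ[P] P[h|𝒢] →
      ∫ x, h x * η x ∂P = ∫ x, σ x * η x ∂P) :
    η =ᵐ[P] P[η|𝒢] := by
  refine Integrable.ae_eq_of_forall_setIntegral_eq _ _ hη integrable_condExp fun s hs _ => ?_
  rw [← sub_eq_zero, ← integral_sub hη.integrableOn integrable_condExp.integrableOn,
    setIntegral_eq_integral_indicator_mul hs]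
  exact integral_mul_sub_condExp_eq_zero h𝒢 hη (bddMeasurable_indicator_one hs)
    fun σ => H _ σ (bddMeasurable_indicator_one hs)

/-- It suffices to test against functions measurable with respect to some stage of an exhausting
filtration. -/
lemma ae_eq_condExp_of_filtration (ℱ : Filtration ℕ mE) (hℱ : ⨆ n, ℱ n = mE) {η : E → ℝ}
    (hη : Integrable η P)
    (H : ∀ k h σ, Measurable[ℱ k] h → BddMeasurable h → Measurable[ℱ 0] σ → BddMeasurable σ →
      σ =ᵐ[P] P[h|ℱ 0] → ∫ x, h x * η x ∂P = ∫ x, σ x * η x ∂P) :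
    η =ᵐ[P] P[η|ℱ 0] := by
  set g : E → ℝ := fun x => η x - (P[η|ℱ 0]) x with hg
  have hgi : Integrable g P := hη.sub integrable_condExp
  have hzero : ∀ k, 0 =ᵐ[P] P[g|ℱ k] := fun k => by
    refine ae_eq_condExp_of_forall_setIntegral_eq (ℱ.le k) hgi
      (fun _ _ _ => integrableOn_zero) (fun s hs _ => ?_) aestronglyMeasurable_zero
    rw [setIntegral_eq_integral_indicator_mul (ℱ.le k s hs) g]
    simp only [Pi.zero_apply, integral_zero]
    exact (integral_mul_sub_condExp_eq_zero (ℱ.le 0) hη (bddMeasurable_indicator_one (ℱ.le k s hs))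
      fun σ => H k _ σ (measurable_const.indicator hs)
        (bddMeasurable_indicator_one (ℱ.le k s hs))).symm
  have hself : P[g|⨆ n, ℱ n] =ᵐ[P] g := by
    refine condExp_of_aestronglyMeasurable' (iSup_le ℱ.le) ?_ hgi
    rw [hℱ]
    exact hgi.1
  filter_upwards [tendsto_ae_condExp (μ := P) (ℱ := ℱ) g, ae_all_iff.2 hzero, hself]
    with x h1 h2 h3
  have h4 : (P[g|⨆ n, ℱ n]) x = 0 :=
    tendsto_nhds_unique h1 (tendsto_const_nhds.congr fun n => by simpa using h2 n)
  rw [h3] at h4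
  exact sub_eq_zero.1 h4

end CondExp

lemma tendsto_div_of_bounded {a : ℕ → ℝ} {C : ℝ} (hC : ∀ n, |a n| ≤ C) :
    Tendsto (fun N : ℕ => a N / N) atTop (𝓝 0) := by
  refine squeeze_zero_norm (fun N => ?_) (tendsto_const_div_atTop_nhds_zero_nat C)
  rw [norm_div, Real.norm_eq_abs, Real.norm_natCast]
  gcongr
  exact hC N

/-- Cesàro averages of a bounded sequence are asymptotically shift invariant. -/
lemma tendsto_cesaro_shift {a : ℕ → ℝ} {C : ℝ} (hC : ∀ n, |a n| ≤ C) (k : ℕ) :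
    Tendsto (fun N : ℕ => (∑ n ∈ Finset.range N, a (n + k)) / N - (∑ n ∈ Finset.range N, a n) / N)
      atTop (𝓝 0) := by
  induction k with
  | zero => simp
  | succ k ih =>
    have h := tendsto_div_of_bounded (a := fun N => a (N + k) - a (0 + k)) (C := C + C)
      fun n => (abs_sub _ _).trans (add_le_add (hC _) (hC _))
    have h2 := h.add ih
    rw [add_zero] at h2
    refine h2.congr fun N => ?_
    rw [← Finset.sum_range_sub (fun n => a (n + k)), Finset.sum_sub_distrib]
    simp only [add_right_comm _ 1 k, add_assoc]
    ring

end WeakLimits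

section FibreDensity

variable {G : ℕ → Matrix (Fin 2) (Fin 2) ℝ} {μ : Measure (ℤ → ℕ)} [IsProbabilityMeasure μ]

/-- The average of a fibre observable after `n` steps, as a function of the final base point. -/
noncomputable def pastMean (G : ℕ → Matrix (Fin 2) (Fin 2) ℝ) (f : (Fin 2 → ℝ) → ℝ) (n : ℕ)
    (ω : ℤ → ℕ) : ℝ :=
  ∫ x, f (wordProd G (unshift^[n] ω) n *ᵥ x) ∂confMeasure

/-- Extending a sequence indexed by nonpositive times to a two-sided one. -/
def extendFuture (a : ℕ → ℕ) : ℤ → ℕ := fun n => a (-n).toNat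

lemma measurable_extendFuture : Measurable extendFuture :=
  measurable_pi_lambda _ fun _ => measurable_pi_apply _

lemma measurable_wordProd_mulVec (n : ℕ) :
    Measurable fun e : (ℤ → ℕ) × (Fin 2 → ℝ) => wordProd G e.1 n *ᵥ e.2 :=
  measurable_mulVec (fun i j => (measurable_wordProd_apply n i j).comp measurable_fst)
    measurable_snd

lemma measurable_pastMean {f : (Fin 2 → ℝ) → ℝ} (hf : BddMeasurable f) (n : ℕ) :
    Measurable (pastMean G f n) := by
  have h : Measurable fun e : (ℤ → ℕ) × (Fin 2 → ℝ) =>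
      f (wordProd G (unshift^[n] e.1) n *ᵥ e.2) :=
    hf.1.comp ((measurable_wordProd_mulVec n).comp
      (((measurable_unshift.iterate n).comp measurable_fst).prodMk measurable_snd))
  exact h.stronglyMeasurable.integral_prod_right.measurable

lemma abs_pastMean_le {f : (Fin 2 → ℝ) → ℝ} {C : ℝ} (hC : ∀ x, |f x| ≤ C) (n : ℕ) (ω : ℤ → ℕ) :
    |pastMean G f n ω| ≤ C := by
  have := norm_integral_le_of_norm_le_const (μ := confMeasure)
    (f := fun x => f (wordProd G (unshift^[n] ω) n *ᵥ x)) (C := C) (ae_of_all _ fun x => hC _)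
  simpa [pastMean] using this

lemma pastMean_eq_projMinus (f : (Fin 2 → ℝ) → ℝ) (n : ℕ) (ω : ℤ → ℕ) :
    pastMean G f n ω = pastMean G f n (extendFuture (projMinus ω)) := by
  unfold pastMean
  rw [wordProd_congr (ω' := unshift^[n] (extendFuture (projMinus ω))) fun i hi => ?_]
  simp only [unshift_iterate_apply, extendFuture, projMinus]
  congr 1
  omega

lemma fibreMean_eq_integral_pastMean (hμ : MeasurePreserving shift μ μ) (n : ℕ)
    {h : (ℤ → ℕ) → ℝ} (hh : BddMeasurable h) {f : (Fin 2 → ℝ) → ℝ} (hf : BddMeasurable f) :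
    fibreMean G μ n h f = ∫ ω, h ω * pastMean G f n ω ∂μ := by
  have hs := hμ.iterate n
  have hmap := integral_map (μ := μ) (f := fun ω => h ω * pastMean G f n ω)
    hs.measurable.aemeasurable (hh.1.mul (measurable_pastMean hf n)).aestronglyMeasurable
  rw [hs.map_eq] at hmap
  rw [hmap, fibreMean, integral_prod _ ((((hh.comp hs.measurable).comp measurable_fst).mul
      (hf.comp (measurable_wordProd_mulVec n))).integrable _)]
  simp only [pastMean, unshift_iterate_shift_iterate, integral_const_mul]

lemma exists_abs_fibreMean_le {h : (ℤ → ℕ) → ℝ} (hh : BddMeasurable h) {f : (Fin 2 → ℝ) → ℝ}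
    (hf : BddMeasurable f) : ∃ C, ∀ n, |fibreMean G μ n h f| ≤ C := by
  obtain ⟨C, hC⟩ := hh.2
  obtain ⟨D, hD⟩ := hf.2
  refine ⟨C * D, fun n => ?_⟩
  have := norm_integral_le_of_norm_le_const (μ := μ.prod confMeasure)
    (f := fun e => h (shift^[n] e.1) * f (wordProd G e.1 n *ᵥ e.2)) (C := C * D)
    (ae_of_all _ fun e => by
      rw [norm_mul]
      exact mul_le_mul (hC _) (hD _) (norm_nonneg _) ((abs_nonneg _).trans (hC e.1)))
  simpa [fibreMean] using this

/-- The σ-algebras generated by the coordinates from time `-k` on. -/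
def futureFiltration : Filtration ℕ (inferInstance : MeasurableSpace (ℤ → ℕ)) where
  seq k := MeasurableSpace.comap (fun ω => projPlus (unshift^[k] ω)) inferInstance
  mono' k l hkl := by
    have h : (fun ω => projPlus (unshift^[k] ω)) =
        (fun a n => a (n + (l - k))) ∘ fun ω => projPlus (unshift^[l] ω) := by
      funext ω n
      simp only [projPlus, unshift_iterate_apply, Function.comp]
      congr 1
      omega
    change MeasurableSpace.comap (fun ω => projPlus (unshift^[k] ω)) _ ≤ _
    rw [h, ← MeasurableSpace.comap_comp]
    exact MeasurableSpace.comap_mono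
      (measurable_pi_lambda _ fun n => measurable_pi_apply _).comap_le
  le' k := (measurable_projPlus.comp (measurable_unshift.iterate k)).comap_le

lemma iSup_futureFiltration :
    ⨆ k, futureFiltration k = (inferInstance : MeasurableSpace (ℤ → ℕ)) := by
  refine le_antisymm (iSup_le futureFiltration.le) (iSup_le fun i => ?_)
  refine le_trans ?_ (le_iSup _ i.natAbs)
  have h : (fun ω : ℤ → ℕ => ω i) =
      (fun a => a (i + i.natAbs).toNat) ∘ fun ω => projPlus (unshift^[i.natAbs] ω) := by
    funext ω
    simp only [projPlus, unshift_iterate_apply, Function.comp]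
    congr 1
    omega
  rw [h, ← MeasurableSpace.comap_comp]
  exact MeasurableSpace.comap_mono (measurable_pi_apply _).comap_le

/-- The normalized sum of the first `N` fibre means. -/
noncomputable def cesaroMean (G : ℕ → Matrix (Fin 2) (Fin 2) ℝ) (μ : Measure (ℤ → ℕ))
    (h : (ℤ → ℕ) → ℝ) (f : (Fin 2 → ℝ) → ℝ) (N : ℕ) : ℝ :=
  (∑ n ∈ Finset.range N, fibreMean G μ n h f) / N

/-- For a cocycle of subexponential growth, the limit distributions in the fibres are described by
a density depending only on the past, and also only on the future. -/
theorem exists_fibre_density (hμ : MeasurePreserving shift μ μ) (hdet : ∀ b, (G b).det = 1)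
    (hG : ∃ K, ∀ b, entrySum (G b) ≤ K)
    (hgrowth : Tendsto (fun N : ℕ => (∫ ω, log (entrySum (wordProd G ω N)) ∂μ) / N) atTop (𝓝 0))
    {f : (Fin 2 → ℝ) → ℝ} (hf : BddMeasurable f) :
    ∃ η : (ℤ → ℕ) → ℝ, Integrable η μ ∧
      (∀ h, BddMeasurable h →
        Tendsto (cesaroMean G μ h f) (hyperfilter ℕ) (𝓝 (∫ ω, h ω * η ω ∂μ))) ∧
      (∃ w : (ℕ → ℕ) → ℝ, Measurable w ∧ ∀ᵐ ω ∂μ, η ω = w (projMinus ω)) ∧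
      ∃ u : (ℕ → ℕ) → ℝ, Measurable u ∧ ∀ᵐ ω ∂μ, η ω = u (projPlus ω) := by
  obtain ⟨C, hC⟩ := hf.2
  have hC0 : 0 ≤ C := (abs_nonneg _).trans (hC 0)
  set avg : ℕ → (ℤ → ℕ) → ℝ := fun N ω => (∑ n ∈ Finset.range N, pastMean G f n ω) / N with havg
  have havgm : ∀ N, Measurable (avg N) := fun N =>
    (Finset.measurable_fun_sum _ fun n _ => measurable_pastMean hf n).div_const _
  have havgC : ∀ N ω, |avg N ω| ≤ C := fun N ω => by
    rw [havg]
    simp only [abs_div, Nat.abs_cast]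
    refine div_le_of_le_mul₀ (by positivity) hC0 ?_
    refine (Finset.abs_sum_le_sum_abs _ _).trans ?_
    refine (Finset.sum_le_card_nsmul _ _ C fun n _ => abs_pastMean_le hC n ω).trans ?_
    simp [mul_comm]
  have hces : ∀ h, BddMeasurable h → ∀ N, cesaroMean G μ h f N = ∫ ω, h ω * avg N ω ∂μ :=
    fun h hh N => by
      simp only [cesaroMean, havg, mul_div_assoc', integral_div, Finset.mul_sum,
        fibreMean_eq_integral_pastMean hμ _ hh hf]
      rw [integral_finsetSum _ fun n _ =>
        (hh.mul ⟨measurable_pastMean hf n, C, abs_pastMean_le hC n⟩).integrable μ]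
  obtain ⟨η, hηi, hη⟩ := exists_weak_limit μ (hyperfilter ℕ) havgm havgC
  have hlim : ∀ h, BddMeasurable h →
      Tendsto (cesaroMean G μ h f) (hyperfilter ℕ) (𝓝 (∫ ω, h ω * η ω ∂μ)) := fun h hh =>
    (hη h hh).congr fun N => (hces h hh N).symm
  have hpast : η =ᵐ[μ] μ[η|MeasurableSpace.comap projMinus inferInstance] := by
    refine ae_eq_condExp_of_forall_integral measurable_projMinus.comap_le hηi
      fun h σ hh hσm hσb hσ => ?_
    refine tendsto_nhds_unique (hη h hh) ((hη σ hσb).congr fun N => ?_)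
    refine integral_condExp_mul measurable_projMinus.comap_le hh hσ ?_
      (BddMeasurable.integrable ⟨havgm N, C, havgC N⟩ μ)
    have : avg N = (fun a => avg N (extendFuture a)) ∘ projMinus := by
      funext ω
      simp only [havg, Function.comp]
      congr 1
      exact Finset.sum_congr rfl fun n _ => pastMean_eq_projMinus f n ω
    rw [this]
    exact ((havgm N).comp measurable_extendFuture).comp (comap_measurable _)
  have hfuture : η =ᵐ[μ] μ[η|futureFiltration 0] := by
    refine ae_eq_condExp_of_filtration futureFiltration iSup_futureFiltration hηi
      fun k h σ hhm hh hσm hσb hσ => ?_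
    obtain ⟨h', hh', rfl⟩ := hhm.exists_eq_measurable_comp
    obtain ⟨u, hu, rfl⟩ := hσm.exists_eq_measurable_comp
    have hsurj : ∀ j : ℕ, Function.Surjective fun ω => projPlus (unshift^[j] ω) := fun j a => by
      obtain ⟨ω, rfl⟩ := projPlus_surjective a
      exact ⟨shift^[j] ω, by simp only [unshift_iterate_shift_iterate]⟩
    have hb : ∀ (j : ℕ) (v : (ℕ → ℕ) → ℝ), Measurable v →
        BddMeasurable (v ∘ fun ω => projPlus (unshift^[j] ω)) → BddMeasurable v := by
      rintro j v hv ⟨-, D, hD⟩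
      refine ⟨hv, D, fun a => ?_⟩
      obtain ⟨ω, rfl⟩ := hsurj j a
      exact hD ω
    have key := cesaro_fibreMean_sub hμ hdet hG hgrowth k (hb k h' hh' hh) (hb 0 u hu hσb)
      (fun v hv => by
        refine (integral_condExp_mul (futureFiltration.le 0) hh hσ ?_
          ((hv.comp measurable_projPlus).integrable μ)).symm
        exact hv.1.comp (comap_measurable _)) hf
    obtain ⟨D₁, hD₁⟩ := exists_abs_fibreMean_le (G := G) (μ := μ) hh hf
    obtain ⟨D₂, hD₂⟩ := exists_abs_fibreMean_le (G := G) (μ := μ) hσb hf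
    have h1 := (key.sub (tendsto_cesaro_shift hD₁ k)).add (tendsto_cesaro_shift hD₂ k)
    have h2 := (h1.mono_left (Nat.hyperfilter_le_atTop)).add (hlim _ hσb)
    simp only [sub_zero, add_zero, zero_add] at h2
    refine tendsto_nhds_unique (hlim _ hh) (h2.congr fun N => ?_)
    simp only [cesaroMean, Finset.sum_sub_distrib, sub_div]
    simp only [Function.comp_def, Function.iterate_zero, id]
    ring
  refine ⟨η, hηi, hlim, ?_, ?_⟩
  · obtain ⟨w, hw, hwη⟩ := (stronglyMeasurable_condExp (μ := μ) (f := η)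
      (m := MeasurableSpace.comap projMinus inferInstance)).measurable.exists_eq_measurable_comp
    exact ⟨w, hw, hpast.trans (ae_of_all _ fun ω => congrFun hwη ω)⟩
  · obtain ⟨u, hu, huη⟩ := (stronglyMeasurable_condExp (μ := μ) (f := η)
      (m := futureFiltration 0)).measurable.exists_eq_measurable_comp
    exact ⟨u, hu, hfuture.trans (ae_of_all _ fun ω => congrFun huη ω)⟩

end FibreDensity

section LetterMean

/-- The two-sided sequence with given past and future. -/
def gluePastFuture (a b : ℕ → ℕ) : ℤ → ℕ := fun n => if 0 ≤ n then b n.toNat else a (-n).toNat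

lemma pairProj_gluePastFuture {a b : ℕ → ℕ} (h : a 0 = b 0) :
    pairProj (gluePastFuture a b) = (a, b) := by
  refine Prod.ext (funext fun n => ?_) (funext fun n => ?_)
  · rcases n.eq_zero_or_pos with rfl | hn
    · simp [pairProj, projMinus, gluePastFuture, h]
    · simp [pairProj, projMinus, gluePastFuture]
      omega
  · simp [pairProj, projPlus, gluePastFuture]

lemma gluePastFuture_mem_SFT {ℓ : ℕ} {W : Set (ℕ × ℕ)} {a b : ℕ → ℕ} (h : a 0 = b 0)
    (ha : ∀ n, (1 ≤ a n ∧ a n ≤ ℓ) ∧ (a (n + 1), a n) ∈ W)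
    (hb : ∀ n, (1 ≤ b n ∧ b n ≤ ℓ) ∧ (b n, b (n + 1)) ∈ W) :
    gluePastFuture a b ∈ SFT ℓ W := by
  refine ⟨fun n => ?_, fun n => ?_⟩
  · unfold gluePastFuture
    split_ifs
    · exact (hb _).1
    · exact (ha _).1
  · unfold gluePastFuture
    rcases lt_trichotomy n (-1) with hn | rfl | hn
    · rw [if_neg (by omega), if_neg (by omega)]
      convert (ha (-(n + 1)).toNat).2 using 3
      omega
    · simpa [← h] using (ha 0).2
    · rw [if_pos (by omega), if_pos (by omega)]
      convert (hb n.toNat).2 using 3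
      omega

lemma measurableSet_admissible (ℓ : ℕ) (W : Set (ℕ × ℕ)) (v : ℕ → ℕ × ℕ) :
    MeasurableSet {a : ℕ → ℕ | ∀ n, (1 ≤ a n ∧ a n ≤ ℓ) ∧ (a (v n).1, a (v n).2) ∈ W} := by
  rw [Set.ofPred_forall]
  have h1 (n : ℕ) : Measurable fun a : ℕ → ℕ => a n := measurable_pi_apply n
  exact MeasurableSet.iInter fun n => (h1 n (MeasurableSet.of_discrete (s := {m | 1 ≤ m ∧ m ≤ ℓ}))).inter
    (((h1 (v n).1).prodMk (h1 (v n).2)) (MeasurableSet.of_discrete (s := W)))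

/-- The indicator function of the cylinder of sequences with a given letter at time `0`. -/
noncomputable def letterIndicator (j : ℕ) : (ℤ → ℕ) → ℝ := {ω | ω 0 = j}.indicator fun _ => 1

lemma measurableSet_letter (n : ℤ) (j : ℕ) : MeasurableSet {ω : ℤ → ℕ | ω n = j} :=
  measurableSet_eq_fun (measurable_pi_apply n) measurable_const

lemma bddMeasurable_letterIndicator (j : ℕ) : BddMeasurable (letterIndicator j) :=
  bddMeasurable_indicator_one (measurableSet_letter 0 j)

lemma integral_letterIndicator (μ : Measure (ℤ → ℕ)) (j : ℕ) :
    ∫ ω, letterIndicator j ω ∂μ = μ.real {ω | ω 0 = j} := by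
  rw [letterIndicator, integral_indicator_const _ (measurableSet_letter 0 j)]
  simp

/-- The mean on fibre observables obtained by averaging over sequences with letter `j`. -/
noncomputable def letterMean (G : ℕ → Matrix (Fin 2) (Fin 2) ℝ) (μ : Measure (ℤ → ℕ)) (j : ℕ)
    (f : (Fin 2 → ℝ) → ℝ) : ℝ :=
  limUnder (hyperfilter ℕ : Filter ℕ) (cesaroMean G μ (letterIndicator j) f) /
    μ.real {ω | ω 0 = j}

/-- The base point at time `n`, given its letter `j`, is asymptotically independent of the fibre
coordinate at time `n`. -/
def AsympIndep (G : ℕ → Matrix (Fin 2) (Fin 2) ℝ) (μ : Measure (ℤ → ℕ)) (j : ℕ) : Prop :=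
  ∀ f, BddMeasurable f → ∀ h, BddMeasurable h →
    Tendsto (cesaroMean G μ (fun ω => letterIndicator j ω * h ω) f) (hyperfilter ℕ)
      (𝓝 (letterMean G μ j f * ∫ ω, letterIndicator j ω * h ω ∂μ))

lemma AsympIndep.tendsto {G : ℕ → Matrix (Fin 2) (Fin 2) ℝ} {μ : Measure (ℤ → ℕ)} {j : ℕ}
    (hc : AsympIndep G μ j) {f : (Fin 2 → ℝ) → ℝ} (hf : BddMeasurable f) :
    Tendsto (cesaroMean G μ (letterIndicator j) f) (hyperfilter ℕ)
      (𝓝 (letterMean G μ j f * μ.real {ω | ω 0 = j})) := by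
  simpa [integral_letterIndicator] using hc f hf _ (BddMeasurable.const 1)

variable {μ : Measure (ℤ → ℕ)} [IsProbabilityMeasure μ]

/-- Under a local product structure, a function depending only on the past and only on the future is
constant on one-letter cylinders. -/
lemma ae_const_on_cylinder {ℓ : ℕ} {W : Set (ℕ × ℕ)} (hconc : μ (SFT ℓ W)ᶜ = 0)
    (hlps : LocalProductStructure ℓ W μ) {η : (ℤ → ℕ) → ℝ} {w u : (ℕ → ℕ) → ℝ} (hw : Measurable w)
    (hu : Measurable u) (hwη : ∀ᵐ ω ∂μ, η ω = w (projMinus ω))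
    (huη : ∀ᵐ ω ∂μ, η ω = u (projPlus ω)) {j : ℕ} (hj1 : 1 ≤ j) (hjℓ : j ≤ ℓ) :
    ∃ c, ∀ᵐ ω ∂μ, ω 0 = j → η ω = c := by
  obtain ⟨ψ, hψpos, hψ⟩ := hlps
  obtain ⟨hψi, hψmap⟩ := hψ j hj1 hjℓ
  have hcyl : MeasurableSet {a : ℕ → ℕ | a 0 = j} := 
    measurableSet_eq_fun (measurable_pi_apply 0) measurable_const
  have hSFT : ∀ᵐ ω ∂μ, ω ∈ SFT ℓ W := hconc
  set α := (Measure.map projMinus μ).restrict {a | a 0 = j} with hα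
  set β := (Measure.map projPlus μ).restrict {a | a 0 = j} with hβ
  have hαae : ∀ {s : Set (ℕ → ℕ)}, MeasurableSet s →
      ((∀ᵐ a ∂α, a ∈ s) ↔ ∀ᵐ ω ∂μ, ω 0 = j → projMinus ω ∈ s) := fun {s} hs => by
    rw [hα, ae_restrict_iff' hcyl, ae_map_iff measurable_projMinus.aemeasurable]
    · simp [projMinus]
    · exact (hcyl.compl.union hs).congr (by ext a; simp [imp_iff_not_or])
  have hβae : ∀ {s : Set (ℕ → ℕ)}, MeasurableSet s →
      ((∀ᵐ a ∂β, a ∈ s) ↔ ∀ᵐ ω ∂μ, ω 0 = j → projPlus ω ∈ s) := fun {s} hs => by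
    rw [hβ, ae_restrict_iff' hcyl, ae_map_iff measurable_projPlus.aemeasurable]
    · simp [projPlus]
    · exact (hcyl.compl.union hs).congr (by ext a; simp [imp_iff_not_or])
  have hA : ∀ᵐ a ∂α, ∀ n, (1 ≤ a n ∧ a n ≤ ℓ) ∧ (a (n + 1), a n) ∈ W := by
    refine (hαae (measurableSet_admissible ℓ W fun n => (n + 1, n))).2 ?_
    filter_upwards [hSFT] with ω hω _ n
    refine ⟨hω.1 _, ?_⟩
    have h := hω.2 (-((n + 1 : ℕ) : ℤ))
    rwa [show -((n + 1 : ℕ) : ℤ) + 1 = -(n : ℤ) by push_cast; ring] at h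
  have hB : ∀ᵐ b ∂β, ∀ n, (1 ≤ b n ∧ b n ≤ ℓ) ∧ (b n, b (n + 1)) ∈ W := by
    refine (hβae (measurableSet_admissible ℓ W fun n => (n, n + 1))).2 ?_
    filter_upwards [hSFT] with ω hω _ n
    refine ⟨hω.1 _, ?_⟩
    simpa [projPlus] using hω.2 (n : ℤ)
  have hA0 : ∀ᵐ a ∂α, a 0 = j := ae_restrict_mem hcyl
  have hB0 : ∀ᵐ b ∂β, b 0 = j := ae_restrict_mem hcyl
  have hψae : ∀ᵐ x ∂(α.prod β), ENNReal.ofReal (ψ x) ≠ 0 := by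
    filter_upwards [Measure.quasiMeasurePreserving_fst.ae hA,
      Measure.quasiMeasurePreserving_fst.ae hA0, Measure.quasiMeasurePreserving_snd.ae hB,
      Measure.quasiMeasurePreserving_snd.ae hB0] with x h1 h2 h3 h4
    have h0 : x.1 0 = x.2 0 := h2.trans h4.symm
    have := hψpos _ (gluePastFuture_mem_SFT h0 h1 h3)
    rw [pairProj_gluePastFuture h0] at this
    simpa using this
  have hac : α.prod β ≪ (α.prod β).withDensity fun x => ENNReal.ofReal (ψ x) :=
    withDensity_absolutelyContinuous' hψi.1.aemeasurable.ennreal_ofReal hψae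
  have hprod : ∀ᵐ x ∂(α.prod β), w x.1 = u x.2 := by
    refine hac.ae_le ?_
    rw [← hψmap]
    refine (ae_map_iff (measurable_projMinus.prodMk measurable_projPlus).aemeasurable
      (measurableSet_eq_fun (hw.comp measurable_fst) (hu.comp measurable_snd))).2 ?_
    refine ae_restrict_of_ae ?_
    filter_upwards [hwη, huη] with ω h1 h2
    exact h1.symm.trans h2
  by_cases hα0 : α = 0
  · refine ⟨0, ?_⟩
    have := (hαae (s := ∅) MeasurableSet.empty).1 (by rw [hα0, ae_zero]; exact eventually_bot)
    filter_upwards [this] with ω h h0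
    exact (h h0).elim
  · have : (ae α).NeBot := ae_neBot.2 hα0
    obtain ⟨a, ha⟩ := (Measure.ae_ae_of_ae_prod hprod).exists
    refine ⟨w a, ?_⟩
    have := (hβae (s := {b | w a = u b}) (measurableSet_eq_fun measurable_const hu)).1 ha
    filter_upwards [this, huη] with ω h1 h2 h0
    rw [h2]
    exact (h1 h0).symm

/-- A finitely additive probability on the punctured plane, acting on bounded functions. -/
structure IsMean (c : ((Fin 2 → ℝ) → ℝ) → ℝ) : Prop where
  add : ∀ f g, BddMeasurable f → BddMeasurable g → c (fun x => f x + g x) = c f + c g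
  const_mul : ∀ a f, BddMeasurable f → c (fun x => a * f x) = a * c f
  one : c (fun _ => 1) = 1
  nonneg : ∀ f, BddMeasurable f → (∀ x, x ≠ 0 → 0 ≤ f x) → 0 ≤ c f

variable {G : ℕ → Matrix (Fin 2) (Fin 2) ℝ}

lemma asympIndep {ℓ : ℕ} {W : Set (ℕ × ℕ)} (hconc : μ (SFT ℓ W)ᶜ = 0)
    (hlps : LocalProductStructure ℓ W μ) (hμ : MeasurePreserving shift μ μ)
    (hdet : ∀ b, (G b).det = 1) (hG : ∃ K, ∀ b, entrySum (G b) ≤ K)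
    (hgrowth : Tendsto (fun N : ℕ => (∫ ω, log (entrySum (wordProd G ω N)) ∂μ) / N) atTop (𝓝 0))
    {j : ℕ} (hj1 : 1 ≤ j) (hjℓ : j ≤ ℓ) (hj : μ {ω | ω 0 = j} ≠ 0) : AsympIndep G μ j := by
  intro f hf
  obtain ⟨η, hηi, hlim, ⟨w, hw, hwη⟩, u, hu, huη⟩ := exists_fibre_density hμ hdet hG hgrowth hf
  obtain ⟨c, hc⟩ := ae_const_on_cylinder hconc hlps hw hu hwη huη hj1 hjℓ
  have key : ∀ h, BddMeasurable h →
      Tendsto (cesaroMean G μ (fun ω => letterIndicator j ω * h ω) f) (hyperfilter ℕ)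
        (𝓝 (c * ∫ ω, letterIndicator j ω * h ω ∂μ)) := fun h hh => by
    have := hlim _ ((bddMeasurable_letterIndicator j).mul hh)
    convert this using 2
    rw [← integral_const_mul]
    refine integral_congr_ae ?_
    filter_upwards [hc] with ω hω
    by_cases h0 : ω 0 = j
    · rw [hω h0]; ring
    · simp [letterIndicator, h0]
  have hone := key _ (BddMeasurable.const 1)
  simp only [mul_one, integral_letterIndicator] at hone
  have : letterMean G μ j f = c := by
    rw [letterMean, hone.limUnder_eq, mul_div_cancel_right₀]
    simpa [Measure.real, ENNReal.toReal_eq_zero_iff] using hj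
  rw [this]
  exact key

lemma pastMean_add {f g : (Fin 2 → ℝ) → ℝ} (hf : BddMeasurable f) (hg : BddMeasurable g) (n : ℕ)
    (ω : ℤ → ℕ) :
    pastMean G (fun x => f x + g x) n ω = pastMean G f n ω + pastMean G g n ω := by
  have hm : Measurable fun x => wordProd G (unshift^[n] ω) n *ᵥ x :=
    measurable_mulVec (M := fun _ => wordProd G (unshift^[n] ω) n) (fun _ _ => measurable_const)
      measurable_id
  exact integral_add ((hf.comp hm).integrable _) ((hg.comp hm).integrable _)

lemma pastMean_nonneg (hdet : ∀ b, (G b).det = 1) {f : (Fin 2 → ℝ) → ℝ}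
    (h0 : ∀ x, x ≠ 0 → 0 ≤ f x) (n : ℕ) (ω : ℤ → ℕ) : 0 ≤ pastMean G f n ω := by
  have hne : ∀ᵐ x ∂confMeasure, x ≠ 0 :=
    (withDensity_absolutelyContinuous _ _).ae_le (Measure.ae_ne volume (0 : Fin 2 → ℝ))
  refine integral_nonneg_of_ae ?_
  filter_upwards [hne] with x hx
  refine h0 _ fun hz => hx ?_
  rw [← adjugate_mulVec_mulVec (det_wordProd hdet (unshift^[n] ω) n) x, hz, Matrix.mulVec_zero]

lemma isMean_letterMean (hμ : MeasurePreserving shift μ μ) (hdet : ∀ b, (G b).det = 1) {j : ℕ}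
    (hj : μ {ω | ω 0 = j} ≠ 0) (hc : AsympIndep G μ j) : IsMean (letterMean G μ j) := by
  have hpos : 0 < μ.real {ω | ω 0 = j} := by
    simpa [Measure.real, ENNReal.toReal_pos_iff] using pos_iff_ne_zero.2 hj
  have hχ := bddMeasurable_letterIndicator j
  have hpm : ∀ {f : (Fin 2 → ℝ) → ℝ}, BddMeasurable f → ∀ n, BddMeasurable (pastMean G f n) :=
    fun {f} hf n => ⟨measurable_pastMean hf n, hf.2.imp fun C hC => abs_pastMean_le hC n⟩
  refine ⟨fun f g hf hg => ?_, fun a f hf => ?_, ?_, fun f hf h0 => ?_⟩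
  · refine mul_right_cancel₀ hpos.ne' ?_
    rw [add_mul]
    refine tendsto_nhds_unique (hc.tendsto (hf.add hg)) (((hc.tendsto hf).add
      (hc.tendsto hg)).congr fun N => ?_)
    simp only [cesaroMean, ← add_div, ← Finset.sum_add_distrib]
    congr 1
    refine Finset.sum_congr rfl fun n _ => ?_
    rw [fibreMean_eq_integral_pastMean hμ n hχ hf, fibreMean_eq_integral_pastMean hμ n hχ hg,
      fibreMean_eq_integral_pastMean hμ n hχ (hf.add hg),
      ← integral_add ((hχ.mul (hpm hf n)).integrable _) ((hχ.mul (hpm hg n)).integrable _)]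
    simp only [pastMean_add hf hg, mul_add]
  · refine mul_right_cancel₀ hpos.ne' ?_
    rw [mul_assoc]
    refine tendsto_nhds_unique (hc.tendsto ((BddMeasurable.const a).mul hf))
      (((hc.tendsto hf).const_mul a).congr fun N => ?_)
    simp only [cesaroMean, mul_div_assoc', Finset.mul_sum]
    congr 1
    refine Finset.sum_congr rfl fun n _ => ?_
    simp only [fibreMean, ← integral_const_mul]
    congr 1
    funext e
    ring
  · refine mul_right_cancel₀ hpos.ne' ?_
    rw [one_mul]
    refine tendsto_nhds_unique (hc.tendsto (BddMeasurable.const 1)) (tendsto_const_nhds.congr' ?_)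
    filter_upwards [Nat.hyperfilter_le_atTop (eventually_gt_atTop 0)] with N hN
    have : ∀ n, fibreMean G μ n (letterIndicator j) (fun _ => 1) = μ.real {ω | ω 0 = j} := fun n => by
      rw [fibreMean_eq_integral_pastMean hμ n hχ (BddMeasurable.const 1)]
      simp [pastMean, integral_letterIndicator]
    simp only [cesaroMean, this, Finset.sum_const, Finset.card_range, nsmul_eq_mul]
    field_simp
  · refine nonneg_of_mul_nonneg_left (ge_of_tendsto (hc.tendsto hf) (Eventually.of_forall fun N => ?_))
      hpos
    refine div_nonneg (Finset.sum_nonneg fun n _ => ?_) (Nat.cast_nonneg N)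
    rw [fibreMean_eq_integral_pastMean hμ n hχ hf]
    refine integral_nonneg fun ω => mul_nonneg ?_ (pastMean_nonneg hdet h0 n ω)
    exact indicator_nonneg (fun _ _ => zero_le_one) _

/-- Means attached to consecutive letters are related by the cocycle. -/
lemma letterMean_step (hμ : MeasurePreserving shift μ μ) {i j : ℕ} (hci : AsympIndep G μ i)
    (hcj : AsympIndep G μ j) (hij : μ {ω | ω 0 = i ∧ ω 1 = j} ≠ 0) {f : (Fin 2 → ℝ) → ℝ}
    (hf : BddMeasurable f) :
    letterMean G μ j f = letterMean G μ i fun x => f (G i *ᵥ x) := by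
  have hmi : MeasurableSet {ω : ℤ → ℕ | ω (-1) = i} := measurableSet_letter _ _
  have hmj : MeasurableSet {ω : ℤ → ℕ | ω 1 = j} := measurableSet_letter _ _
  have hfG : BddMeasurable fun x => f (G i *ᵥ x) :=
    hf.comp (measurable_mulVec (M := fun _ => G i) (fun _ _ => measurable_const) measurable_id)
  have hbi : BddMeasurable ({ω : ℤ → ℕ | ω (-1) = i}.indicator fun _ => (1 : ℝ)) :=
    bddMeasurable_indicator_one hmi
  have h1 := hcj f hf _ hbi
  have h2 := hci _ hfG _ (bddMeasurable_indicator_one hmj)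
  have hpt : ∀ ω, letterIndicator j (shift ω) *
      {ω : ℤ → ℕ | ω (-1) = i}.indicator (fun _ => (1 : ℝ)) (shift ω) =
      letterIndicator i ω * {ω : ℤ → ℕ | ω 1 = j}.indicator (fun _ => (1 : ℝ)) ω := fun ω => by
    simp [letterIndicator, shift, indicator, mul_comm]
  have hstep : ∀ n, fibreMean G μ (n + 1) (fun ω => letterIndicator j ω *
      {ω : ℤ → ℕ | ω (-1) = i}.indicator (fun _ => (1 : ℝ)) ω) f =
      fibreMean G μ n (fun ω => letterIndicator i ω *
        {ω : ℤ → ℕ | ω 1 = j}.indicator (fun _ => (1 : ℝ)) ω) fun x => f (G i *ᵥ x) := fun n => by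
    unfold fibreMean
    congr 1
    funext e
    rw [Function.iterate_succ_apply', wordProd, ← Matrix.mulVec_mulVec]
    simp only [hpt]
    by_cases h0 : e.1 n = i
    · rw [h0]
    · have : shift^[n] e.1 0 ≠ i := by rwa [shift_iterate_apply, zero_add]
      simp [letterIndicator, this]
  obtain ⟨D, hD⟩ := exists_abs_fibreMean_le (G := G) (μ := μ)
    ((bddMeasurable_letterIndicator j).mul hbi) hf
  have h3 := ((tendsto_cesaro_shift hD 1).mono_left Nat.hyperfilter_le_atTop).add h1
  rw [zero_add] at h3
  have h4 := tendsto_nhds_unique h2 (h3.congr fun N => by simp [cesaroMean, hstep])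
  have hint : ∫ ω, letterIndicator j ω * {ω : ℤ → ℕ | ω (-1) = i}.indicator (fun _ => (1 : ℝ)) ω ∂μ =
      ∫ ω, letterIndicator i ω * {ω : ℤ → ℕ | ω 1 = j}.indicator (fun _ => (1 : ℝ)) ω ∂μ := by
    have hmap := integral_map (μ := μ) hμ.measurable.aemeasurable
      ((bddMeasurable_letterIndicator j).mul hbi).1.aestronglyMeasurable
    rw [hμ.map_eq] at hmap
    rw [hmap]
    simp only [hpt]
  rw [hint] at h4
  refine (mul_right_cancel₀ ?_ h4).symm
  have : ∀ ω, letterIndicator i ω * {ω : ℤ → ℕ | ω 1 = j}.indicator (fun _ => (1 : ℝ)) ω =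
      {ω : ℤ → ℕ | ω 0 = i ∧ ω 1 = j}.indicator (fun _ => (1 : ℝ)) ω := fun ω => by
    by_cases h0 : ω 0 = i <;> by_cases h1 : ω 1 = j <;> simp [letterIndicator, h0, h1]
  simp only [this]
  have hm : MeasurableSet {ω : ℤ → ℕ | ω 0 = i ∧ ω 1 = j} := (measurableSet_letter 0 i).inter hmj
  rw [integral_indicator_const _ hm]
  simpa [Measure.real, ENNReal.toReal_eq_zero_iff] using hij

end LetterMean

section MeanRotation

lemma BddMeasurable.lin {E : Type*} [MeasurableSpace E] {f g : E → ℝ} (hf : BddMeasurable f)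
    (hg : BddMeasurable g) (a b : ℝ) : BddMeasurable fun x => a * f x + b * g x :=
  ((BddMeasurable.const a).mul hf).add ((BddMeasurable.const b).mul hg)

namespace IsMean

variable {c : ((Fin 2 → ℝ) → ℝ) → ℝ}

lemma lin (hc : IsMean c) {f g : (Fin 2 → ℝ) → ℝ} (hf : BddMeasurable f) (hg : BddMeasurable g)
    (a b : ℝ) : c (fun x => a * f x + b * g x) = a * c f + b * c g := by
  rw [hc.add _ _ ((BddMeasurable.const a).mul hf) ((BddMeasurable.const b).mul hg),
    hc.const_mul a f hf, hc.const_mul b g hg]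

lemma mono (hc : IsMean c) {f g : (Fin 2 → ℝ) → ℝ} (hf : BddMeasurable f) (hg : BddMeasurable g)
    (h : ∀ x, x ≠ 0 → f x ≤ g x) : c f ≤ c g := by
  have := hc.nonneg _ (hg.lin hf 1 (-1)) fun x hx => by linarith [h x hx]
  rw [hc.lin hg hf] at this
  linarith

lemma congr (hc : IsMean c) {f g : (Fin 2 → ℝ) → ℝ} (hf : BddMeasurable f) (hg : BddMeasurable g)
    (h : ∀ x, x ≠ 0 → f x = g x) : c f = c g :=
  (hc.mono hf hg fun x hx => (h x hx).le).antisymm (hc.mono hg hf fun x hx => (h x hx).ge)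

/-- A pair of observables rotated nontrivially by a measure preserving map has mean zero. -/
lemma eq_zero_of_rotate (hc : IsMean c) {R : (Fin 2 → ℝ) → Fin 2 → ℝ}
    (hR : ∀ f, BddMeasurable f → c (fun x => f (R x)) = c f) {f g : (Fin 2 → ℝ) → ℝ}
    (hf : BddMeasurable f) (hg : BddMeasurable g) {a b : ℝ} (hab : (1 - a) ^ 2 + b ^ 2 ≠ 0)
    (hfR : ∀ x, f (R x) = a * f x + b * g x) (hgR : ∀ x, g (R x) = -b * f x + a * g x) :
    c f = 0 ∧ c g = 0 := by
  have h1 := hR f hf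
  have h2 := hR g hg
  simp only [hfR, hgR] at h1 h2
  rw [hc.lin hf hg] at h1 h2
  have h3 : ((1 - a) ^ 2 + b ^ 2) * c f = 0 := by linear_combination (-(1 - a)) * h1 - b * h2
  have h4 : ((1 - a) ^ 2 + b ^ 2) * c g = 0 := by linear_combination b * h1 - (1 - a) * h2
  exact ⟨(mul_eq_zero.1 h3).resolve_left hab, (mul_eq_zero.1 h4).resolve_left hab⟩

end IsMean

/-- The cosine of twice the angle of a plane vector. -/
noncomputable def cosTwo (x : Fin 2 → ℝ) : ℝ := (x 0 ^ 2 - x 1 ^ 2) / (x 0 ^ 2 + x 1 ^ 2)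

/-- The sine of twice the angle of a plane vector. -/
noncomputable def sinTwo (x : Fin 2 → ℝ) : ℝ := 2 * x 0 * x 1 / (x 0 ^ 2 + x 1 ^ 2)

lemma sq_add_sq_pos_of_ne_zero {x : Fin 2 → ℝ} (hx : x ≠ 0) : 0 < x 0 ^ 2 + x 1 ^ 2 := by
  by_contra! h
  refine hx (funext fun i => ?_)
  fin_cases i <;> simp <;> nlinarith [sq_nonneg (x 0), sq_nonneg (x 1)]

lemma cosTwo_sq_add_sinTwo_sq {x : Fin 2 → ℝ} (hx : x ≠ 0) : cosTwo x ^ 2 + sinTwo x ^ 2 = 1 := by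
  have := sq_add_sq_pos_of_ne_zero hx
  unfold cosTwo sinTwo
  field_simp
  ring

lemma cosTwo_sq_add_sinTwo_sq_le (x : Fin 2 → ℝ) : cosTwo x ^ 2 + sinTwo x ^ 2 ≤ 1 := by
  by_cases hx : x = 0
  · simp [hx, cosTwo, sinTwo]
  · exact (cosTwo_sq_add_sinTwo_sq hx).le

lemma bddMeasurable_cosTwo : BddMeasurable cosTwo :=
  ⟨by unfold cosTwo; fun_prop, 1, fun x => abs_le_one_iff_mul_self_le_one.2
    (by nlinarith [cosTwo_sq_add_sinTwo_sq_le x, sq_nonneg (sinTwo x)])⟩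

lemma bddMeasurable_sinTwo : BddMeasurable sinTwo :=
  ⟨by unfold sinTwo; fun_prop, 1, fun x => abs_le_one_iff_mul_self_le_one.2
    (by nlinarith [cosTwo_sq_add_sinTwo_sq_le x, sq_nonneg (cosTwo x)])⟩

/-- The quotient `‖M x‖² / ‖x‖²`, written as a trigonometric polynomial in the angle of `x`. -/
noncomputable def dilation (M : Matrix (Fin 2) (Fin 2) ℝ) (x : Fin 2 → ℝ) : ℝ :=
  (M 0 0 ^ 2 + M 0 1 ^ 2 + M 1 0 ^ 2 + M 1 1 ^ 2) / 2 +
    ((M 0 0 ^ 2 + M 1 0 ^ 2 - M 0 1 ^ 2 - M 1 1 ^ 2) / 2 * cosTwo x +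
      (M 0 0 * M 0 1 + M 1 0 * M 1 1) * sinTwo x)

lemma bddMeasurable_dilation (M : Matrix (Fin 2) (Fin 2) ℝ) : BddMeasurable (dilation M) :=
  (BddMeasurable.const _).add (bddMeasurable_cosTwo.lin bddMeasurable_sinTwo _ _)

lemma dilation_mul (M : Matrix (Fin 2) (Fin 2) ℝ) {x : Fin 2 → ℝ} (hx : x ≠ 0) :
    dilation M x * (x 0 ^ 2 + x 1 ^ 2) = (M *ᵥ x) 0 ^ 2 + (M *ᵥ x) 1 ^ 2 := by
  have := sq_add_sq_pos_of_ne_zero hx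
  simp only [dilation, cosTwo, sinTwo, Matrix.mulVec, dotProduct, Fin.sum_univ_two]
  field_simp
  ring

lemma mulVec_ne_zero_of_det_eq_one {M : Matrix (Fin 2) (Fin 2) ℝ} (hM : M.det = 1) {x : Fin 2 → ℝ}
    (hx : x ≠ 0) : M *ᵥ x ≠ 0 := fun h =>
  hx (by rw [← adjugate_mulVec_mulVec hM x, h, Matrix.mulVec_zero])

lemma dilation_mul_dilation_adjugate {M : Matrix (Fin 2) (Fin 2) ℝ} (hM : M.det = 1)
    {x : Fin 2 → ℝ} (hx : x ≠ 0) : dilation M x * dilation M.adjugate (M *ᵥ x) = 1 := by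
  have h0 := sq_add_sq_pos_of_ne_zero hx
  have h1 := sq_add_sq_pos_of_ne_zero (mulVec_ne_zero_of_det_eq_one hM hx)
  have h2 := dilation_mul M hx
  have h3 := dilation_mul M.adjugate (mulVec_ne_zero_of_det_eq_one hM hx)
  rw [adjugate_mulVec_mulVec hM] at h3
  have h4 : (dilation M x * dilation M.adjugate (M *ᵥ x) - 1) *
      ((x 0 ^ 2 + x 1 ^ 2) * ((M *ᵥ x) 0 ^ 2 + (M *ᵥ x) 1 ^ 2)) = 0 := by
    linear_combination dilation M.adjugate (M *ᵥ x) * ((M *ᵥ x) 0 ^ 2 + (M *ᵥ x) 1 ^ 2) * h2 +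
      ((M *ᵥ x) 0 ^ 2 + (M *ᵥ x) 1 ^ 2) * h3
  linarith [(mul_eq_zero.1 h4).resolve_right (by positivity)]

/-- A mean invariant under a rotation of order larger than four has vanishing second and fourth
Fourier coefficients. -/
lemma IsMean.trig_eq_zero {c : ((Fin 2 → ℝ) → ℝ) → ℝ} (hc : IsMean c) {k : ℝ} (hs : sin k ≠ 0)
    (hcos : cos k ≠ 0)
    (hR : ∀ f, BddMeasurable f → c (fun x => f (!![cos k, sin k; -sin k, cos k] *ᵥ x)) = c f) :
    (c cosTwo = 0 ∧ c sinTwo = 0) ∧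
      c (fun x => cosTwo x * cosTwo x - sinTwo x * sinTwo x) = 0 ∧
      c (fun x => 2 * (cosTwo x * sinTwo x)) = 0 := by
  have hcs := sin_sq_add_cos_sq k
  have hC := bddMeasurable_cosTwo
  have hS := bddMeasurable_sinTwo
  have hden : ∀ x : Fin 2 → ℝ, (cos k * x 0 + sin k * x 1) ^ 2 + (-(sin k * x 0) + cos k * x 1) ^ 2 =
      x 0 ^ 2 + x 1 ^ 2 := fun x => by linear_combination (x 0 ^ 2 + x 1 ^ 2) * hcs
  have hCR : ∀ x, cosTwo (!![cos k, sin k; -sin k, cos k] *ᵥ x) =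
      (cos k ^ 2 - sin k ^ 2) * cosTwo x + 2 * sin k * cos k * sinTwo x := fun x => by
    simp only [cosTwo, sinTwo, Matrix.mulVec, dotProduct, Fin.sum_univ_two, of_apply, cons_val_zero,
      cons_val_one, neg_mul, hden]
    ring
  have hSR : ∀ x, sinTwo (!![cos k, sin k; -sin k, cos k] *ᵥ x) =
      -(2 * sin k * cos k) * cosTwo x + (cos k ^ 2 - sin k ^ 2) * sinTwo x := fun x => by
    simp only [cosTwo, sinTwo, Matrix.mulVec, dotProduct, Fin.sum_univ_two, of_apply, cons_val_zero,
      cons_val_one, neg_mul, hden]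
    ring
  have hne : (1 - (cos k ^ 2 - sin k ^ 2)) ^ 2 + (2 * sin k * cos k) ^ 2 ≠ 0 := by
    have : 0 < (2 * sin k * cos k) ^ 2 := by positivity
    positivity
  have hD : BddMeasurable fun x => cosTwo x * cosTwo x - sinTwo x * sinTwo x :=
    (hC.mul hC).sub (hS.mul hS)
  have hE : BddMeasurable fun x => 2 * (cosTwo x * sinTwo x) := (BddMeasurable.const 2).mul (hC.mul hS)
  refine ⟨hc.eq_zero_of_rotate hR hC hS hne hCR hSR, hc.eq_zero_of_rotate hR hD hE
    (a := (cos k ^ 2 - sin k ^ 2) ^ 2 - (2 * sin k * cos k) ^ 2)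
    (b := 2 * (cos k ^ 2 - sin k ^ 2) * (2 * sin k * cos k))
    (by
      have h1 : (cos k ^ 2 - sin k ^ 2) ^ 2 = 1 - (2 * sin k * cos k) ^ 2 := by
        linear_combination (sin k ^ 2 + cos k ^ 2 + 1) * hcs
      have h2 : 0 < (2 * sin k * cos k) ^ 2 := by positivity
      rw [mul_pow, mul_pow, h1]
      nlinarith)
    (fun x => by rw [hCR, hSR]; ring) (fun x => by rw [hCR, hSR]; ring)⟩

/-- A unimodular matrix leaving invariant a mean which is invariant under a rotation of order larger
than four is itself a rotation. -/
lemma IsMean.eq_rotation {c : ((Fin 2 → ℝ) → ℝ) → ℝ} (hc : IsMean c) {k : ℝ} (hs : sin k ≠ 0)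
    (hcos : cos k ≠ 0)
    (hR : ∀ f, BddMeasurable f → c (fun x => f (!![cos k, sin k; -sin k, cos k] *ᵥ x)) = c f)
    {M : Matrix (Fin 2) (Fin 2) ℝ} (hM : M.det = 1)
    (hinv : ∀ f, BddMeasurable f → c (fun x => f (M *ᵥ x)) = c f) :
    M 0 0 = M 1 1 ∧ M 0 1 = -M 1 0 := by
  have hC := bddMeasurable_cosTwo
  have hS := bddMeasurable_sinTwo
  have hD : BddMeasurable fun x => cosTwo x * cosTwo x - sinTwo x * sinTwo x :=
    (hC.mul hC).sub (hS.mul hS)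
  have hE : BddMeasurable fun x => 2 * (cosTwo x * sinTwo x) := (BddMeasurable.const 2).mul (hC.mul hS)
  obtain ⟨⟨hC0, hS0⟩, hD0, hE0⟩ := hc.trig_eq_zero hs hcos hR
  set A := (M 0 0 ^ 2 + M 0 1 ^ 2 + M 1 0 ^ 2 + M 1 1 ^ 2) / 2 with hA
  set α := (M 0 0 ^ 2 + M 1 0 ^ 2 - M 0 1 ^ 2 - M 1 1 ^ 2) / 2 with hα
  set β := M 0 0 * M 0 1 + M 1 0 * M 1 1 with hβ
  rw [det_fin_two] at hM
  have hAαβ : α ^ 2 + β ^ 2 = A ^ 2 - 1 := by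
    have : A ^ 2 - (α ^ 2 + β ^ 2) = (M 0 0 * M 1 1 - M 0 1 * M 1 0) ^ 2 := by
      rw [hA, hα, hβ]; ring
    rw [hM] at this
    linarith
  have hA1 : 1 ≤ A := by
    rw [← hM, hA]
    nlinarith [sq_nonneg (M 0 0 - M 1 1), sq_nonneg (M 0 1 + M 1 0)]
  set u : (Fin 2 → ℝ) → ℝ := fun x => α * cosTwo x + β * sinTwo x with hu_def
  have hu : BddMeasurable u := hC.lin hS α β
  have hcu : c u = 0 := by rw [hu_def, hc.lin hC hS, hC0, hS0]; ring
  have hcu2 : c (fun x => u x * u x) = (A ^ 2 - 1) / 2 := by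
    rw [hc.congr (hu.mul hu) ((BddMeasurable.const 1).lin (hD.lin hE ((α ^ 2 - β ^ 2) / 2) (α * β))
      ((A ^ 2 - 1) / 2) 1) fun x hx => ?_, hc.lin (BddMeasurable.const 1) (hD.lin hE _ _),
      hc.lin hD hE, hc.one, hD0, hE0]
    · ring
    · rw [← hAαβ]
      simp only [hu_def]
      linear_combination (α ^ 2 + β ^ 2) / 2 * cosTwo_sq_add_sinTwo_sq hx
  have hdil : ∀ x, dilation M x = A + u x := fun x => rfl
  set g : (Fin 2 → ℝ) → ℝ := fun x => dilation M.adjugate (M *ᵥ x) with hg_def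
  have hg : BddMeasurable g := (bddMeasurable_dilation _).comp
    (measurable_mulVec (M := fun _ => M) (fun _ _ => measurable_const) measurable_id)
  have hcg : c g = A := by
    rw [hg_def, hinv _ (bddMeasurable_dilation _)]
    have : dilation M.adjugate = fun x => A * 1 + 1 *
        ((M 1 1 ^ 2 + M 1 0 ^ 2 - M 0 1 ^ 2 - M 0 0 ^ 2) / 2 * cosTwo x +
          -(M 1 1 * M 0 1 + M 1 0 * M 0 0) * sinTwo x) := by
      funext x
      simp only [dilation, adjugate_fin_two, of_apply, cons_val_zero, cons_val_one, hA]
      ring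
    rw [this, hc.lin (BddMeasurable.const 1) (hC.lin hS _ _), hc.lin hC hS, hc.one, hC0, hS0]
    ring
  have hle : c (fun x => 1 * g x + (-(1 / (2 * A))) * (u x * u x)) ≤
      c (fun x => (A - (A ^ 2 - 1) / (2 * A)) * 1 + (-1) * u x) := by
    refine hc.mono (hg.lin (hu.mul hu) _ _) ((BddMeasurable.const 1).lin hu _ _) fun x hx => ?_
    have h1 : (A + u x) * g x = 1 := hdil x ▸ dilation_mul_dilation_adjugate
      (by rw [det_fin_two]; exact hM) hx
    have h2 : u x ^ 2 ≤ A ^ 2 - 1 := by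
      have := cosTwo_sq_add_sinTwo_sq hx
      have h3 : u x ^ 2 + (α * sinTwo x - β * cosTwo x) ^ 2 = A ^ 2 - 1 := by
        rw [← hAαβ]
        simp only [hu_def]
        linear_combination (α ^ 2 + β ^ 2) * this
      nlinarith [sq_nonneg (α * sinTwo x - β * cosTwo x)]
    have h3 : |u x| < A := abs_lt_of_sq_lt_sq (by linarith) (by linarith)
    rw [abs_lt] at h3
    have h4 : g x = 1 / (A + u x) := by rw [eq_div_iff (by linarith)]; linarith
    rw [h4, ← sub_nonneg]
    have h5 : (A - (A ^ 2 - 1) / (2 * A)) * 1 + (-1) * u x -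
        (1 * (1 / (A + u x)) + (-(1 / (2 * A))) * (u x * u x)) =
        (A ^ 2 - 1 - u x ^ 2) * (A - u x) / (2 * A * (A + u x)) := by
      have : A + u x ≠ 0 := by linarith
      have : A ≠ 0 := by linarith
      field_simp
      ring
    rw [h5]
    refine div_nonneg (mul_nonneg (by linarith) (by linarith)) ?_
    exact mul_nonneg (by linarith) (by linarith)
  rw [hc.lin hg (hu.mul hu), hc.lin (BddMeasurable.const 1) hu, hcg, hcu, hcu2, hc.one] at hle
  have hA2 : A ≤ 1 := by
    by_contra! h
    have h6 : 0 < (A ^ 2 - 1) / (2 * A) := div_pos (by nlinarith) (by linarith)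
    have h7 : 1 / (2 * A) * ((A ^ 2 - 1) / 2) = (A ^ 2 - 1) / (2 * A) / 2 := by ring
    linarith
  have h8 : (M 0 0 - M 1 1) ^ 2 + (M 0 1 + M 1 0) ^ 2 ≤ 0 := by linarith
  have h9 : (M 0 0 - M 1 1) ^ 2 = 0 := by linarith [sq_nonneg (M 0 0 - M 1 1), sq_nonneg (M 0 1 + M 1 0)]
  have h10 : (M 0 1 + M 1 0) ^ 2 = 0 := by linarith [sq_nonneg (M 0 0 - M 1 1), sq_nonneg (M 0 1 + M 1 0)]
  exact ⟨sub_eq_zero.1 (pow_eq_zero_iff two_ne_zero |>.1 h9),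
    eq_neg_of_add_eq_zero_left (pow_eq_zero_iff two_ne_zero |>.1 h10)⟩

end MeanRotation

section Conjugation

lemma abs_apply_le_norm (M : Matrix (Fin 2) (Fin 2) ℝ) (i j : Fin 2) : |M i j| ≤ ‖M‖ := by
  have h := Matrix.l2_opNorm_mulVec M (EuclideanSpace.single j 1)
  have h2 := PiLp.norm_apply_le (WithLp.toLp 2 (M *ᵥ (EuclideanSpace.single j (1 : ℝ)).ofLp)) i
  simp only [PiLp.norm_single, norm_one, mul_one] at h
  refine le_trans ?_ (h2.trans h)
  simp

lemma entrySum_le_norm (M : Matrix (Fin 2) (Fin 2) ℝ) : entrySum M ≤ 4 * ‖M‖ := by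
  rw [entrySum_eq]
  linarith [abs_apply_le_norm M 0 0, abs_apply_le_norm M 0 1, abs_apply_le_norm M 1 0,
    abs_apply_le_norm M 1 1]

lemma entrySum_smul (a : ℝ) (M : Matrix (Fin 2) (Fin 2) ℝ) :
    entrySum (a • M) = |a| * entrySum M := by
  simp only [entrySum_eq, Matrix.smul_apply, smul_eq_mul, abs_mul]
  ring

lemma exists_forall_letters_le (ℓ : ℕ) (φ : ℕ → ℕ → ℝ) :
    ∃ K, ∀ a ≤ ℓ, ∀ b ≤ ℓ, φ a b ≤ K := by
  obtain ⟨K, hK⟩ := ((Finset.range (ℓ + 1) ×ˢ Finset.range (ℓ + 1)).image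
    fun x => φ x.1 x.2).exists_le
  refine ⟨K, fun a ha b hb => hK _ (Finset.mem_image.2 ⟨(a, b), ?_, rfl⟩)⟩
  simp only [Finset.mem_product, Finset.mem_range]
  omega

/-- The matrix attached to a letter after conjugating the cocycle; the fixed letter `p` acts by a
rotation. -/
noncomputable def letterMatrix (ℓ p : ℕ) (k : ℝ) (b : ℕ) : Matrix (Fin 2) (Fin 2) ℝ :=
  if 1 ≤ b ∧ b ≤ ℓ then !![cos k, p / b * sin k; -(b / p * sin k), cos k] else 1

lemma letterMatrix_of_mem {ℓ b : ℕ} (hb : 1 ≤ b ∧ b ≤ ℓ) (p : ℕ) (k : ℝ) :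
    letterMatrix ℓ p k b = !![cos k, p / b * sin k; -(b / p * sin k), cos k] := if_pos hb

lemma letterMatrix_self {ℓ p : ℕ} (hp : 1 ≤ p ∧ p ≤ ℓ) (k : ℝ) :
    letterMatrix ℓ p k p = !![cos k, sin k; -sin k, cos k] := by
  have : (p : ℝ) ≠ 0 := by exact_mod_cast (show p ≠ 0 by omega)
  simp [letterMatrix_of_mem hp, div_self this]

lemma det_letterMatrix {p : ℕ} (hp : 1 ≤ p) (ℓ : ℕ) (k : ℝ) (b : ℕ) :
    (letterMatrix ℓ p k b).det = 1 := by
  unfold letterMatrix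
  split_ifs with h
  · have h1 : (p : ℝ) ≠ 0 := by exact_mod_cast (show p ≠ 0 by omega)
    have h2 : (b : ℝ) ≠ 0 := by exact_mod_cast (show b ≠ 0 by omega)
    rw [det_fin_two_of, ← sin_sq_add_cos_sq k]
    field_simp
    ring
  · simp

lemma exists_entrySum_letterMatrix_le (ℓ p : ℕ) (k : ℝ) :
    ∃ K, ∀ b, entrySum (letterMatrix ℓ p k b) ≤ K := by
  obtain ⟨K, hK⟩ := exists_forall_letters_le ℓ fun _ b => entrySum (letterMatrix ℓ p k b)
  refine ⟨max K (entrySum 1), fun b => ?_⟩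
  by_cases hb : b ≤ ℓ
  · exact (hK 0 (Nat.zero_le _) b hb).trans (le_max_left _ _)
  · rw [letterMatrix, if_neg fun h => hb h.2]
    exact le_max_right _ _

/-- The change of coordinates conjugating the cocycle to the matrices `letterMatrix`. -/
noncomputable def conjMatrix (p : ℕ) (k : ℝ) (a : ℕ) : Matrix (Fin 2) (Fin 2) ℝ :=
  !![1, 0; a / p * (cos k / sin k), -(a / p / sin k)]

/-- The inverse of `conjMatrix`. -/
noncomputable def conjMatrixInv (p : ℕ) (k : ℝ) (a : ℕ) : Matrix (Fin 2) (Fin 2) ℝ :=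
  !![1, 0; cos k, -(p / a * sin k)]

lemma conjMatrix_mul_inv {p a : ℕ} (hp : 1 ≤ p) (ha : 1 ≤ a) {k : ℝ} (hk : sin k ≠ 0) :
    conjMatrix p k a * conjMatrixInv p k a = 1 := by
  have h1 : (p : ℝ) ≠ 0 := by exact_mod_cast (show p ≠ 0 by omega)
  have h2 : (a : ℝ) ≠ 0 := by exact_mod_cast (show a ≠ 0 by omega)
  ext i j
  fin_cases i <;> fin_cases j <;>
    simp [conjMatrix, conjMatrixInv, Matrix.mul_apply, Fin.sum_univ_two] <;> field_simp
  ring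

lemma shift_iterate_mem_SFT {ℓ : ℕ} {W : Set (ℕ × ℕ)} {ω : ℤ → ℕ} (hω : ω ∈ SFT ℓ W) (n : ℕ) :
    shift^[n] ω ∈ SFT ℓ W := by
  refine ⟨fun i => ?_, fun i => ?_⟩
  · rw [shift_iterate_apply]
    exact hω.1 _
  · rw [shift_iterate_apply, shift_iterate_apply, add_right_comm]
    exact hω.2 _

lemma conjMatrix_mul_Acoc {ℓ p : ℕ} (hp : 1 ≤ p) {k : ℝ} (hk : sin k ≠ 0) {ω : ℤ → ℕ}
    (h0 : 1 ≤ ω 0 ∧ ω 0 ≤ ℓ) :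
    conjMatrix p k (ω 0) * Acoc k ω = √((ω 0 : ℝ) / ω (-1)) •
      (letterMatrix ℓ p k (ω 0) * conjMatrix p k (ω (-1))) := by
  have h1 : (p : ℝ) ≠ 0 := by exact_mod_cast (show p ≠ 0 by omega)
  have h2 : (ω 0 : ℝ) ≠ 0 := by exact_mod_cast (show ω 0 ≠ 0 by omega)
  rw [letterMatrix_of_mem h0, Acoc, Matrix.mul_smul]
  congr 1
  have hcs := sin_sq_add_cos_sq k
  ext i j
  fin_cases i <;> fin_cases j <;>
    simp [conjMatrix, Matrix.mul_apply, Fin.sum_univ_two] <;> field_simp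
  linear_combination (ω 0 : ℝ) * hcs

lemma wordProd_mul_conjMatrix {ℓ p : ℕ} {W : Set (ℕ × ℕ)} (hp : 1 ≤ p) {k : ℝ} (hk : sin k ≠ 0)
    {ω : ℤ → ℕ} (hω : ω ∈ SFT ℓ W) (n : ℕ) :
    wordProd (letterMatrix ℓ p k) ω n * conjMatrix p k (ω (-1)) =
      √((ω (-1) : ℝ) / ω (n - 1)) • (conjMatrix p k (ω (n - 1)) * AIter k ω n) := by
  have hpos : ∀ i, (0 : ℝ) < ω i := fun i => by exact_mod_cast (hω.1 i).1
  induction n with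
  | zero =>
    have := (hpos (-1)).ne'
    simp [wordProd, AIter, div_self this]
  | succ n ih =>
    have h := conjMatrix_mul_Acoc (ℓ := ℓ) hp hk (ω := shift^[n] ω)
      ((shift_iterate_mem_SFT hω n).1 0)
    simp only [shift_iterate_apply, zero_add, neg_add_eq_sub] at h
    have hs : √((ω (-1) : ℝ) / ω (n - 1)) =
        √((ω (-1) : ℝ) / ω n) * √((ω n : ℝ) / ω (n - 1)) := by
      rw [← sqrt_mul (by have := hpos (-1); have := hpos n; positivity)]
      congr 1
      have := (hpos n).ne'
      field_simp
    rw [wordProd, AIter, Matrix.mul_assoc, ih, Matrix.mul_smul, ← Matrix.mul_assoc,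
      ← Matrix.mul_assoc, hs, mul_smul, ← Matrix.smul_mul, ← h]
    simp

lemma exists_entrySum_wordProd_le_norm {ℓ p : ℕ} (W : Set (ℕ × ℕ)) (hp : 1 ≤ p) {k : ℝ}
    (hk : sin k ≠ 0) :
    ∃ K, ∀ ω ∈ SFT ℓ W, ∀ n, entrySum (wordProd (letterMatrix ℓ p k) ω n) ≤ K * ‖AIter k ω n‖ := by
  obtain ⟨K, hK⟩ := exists_forall_letters_le ℓ fun a b =>
    √((a : ℝ) / b) * (entrySum (conjMatrix p k b) * 4) * entrySum (conjMatrixInv p k a)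
  refine ⟨K, fun ω hω n => ?_⟩
  have h1 := wordProd_mul_conjMatrix (p := p) hp hk hω n
  have h2 : wordProd (letterMatrix ℓ p k) ω n = √((ω (-1) : ℝ) / ω (n - 1)) •
      (conjMatrix p k (ω (n - 1)) * AIter k ω n) * conjMatrixInv p k (ω (-1)) := by
    rw [← h1, Matrix.mul_assoc, conjMatrix_mul_inv hp (hω.1 _).1 hk, Matrix.mul_one]
  have h3 := entrySum_nonneg (conjMatrix p k (ω (n - 1)))
  have h4 := entrySum_nonneg (conjMatrixInv p k (ω (-1)))
  calc entrySum (wordProd (letterMatrix ℓ p k) ω n)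
      ≤ √((ω (-1) : ℝ) / ω (n - 1)) * (entrySum (conjMatrix p k (ω (n - 1))) *
          (4 * ‖AIter k ω n‖)) * entrySum (conjMatrixInv p k (ω (-1))) := by
        rw [h2]
        refine (entrySum_mul_le _ _).trans ?_
        rw [entrySum_smul, abs_of_nonneg (sqrt_nonneg _)]
        gcongr
        refine (entrySum_mul_le _ _).trans ?_
        gcongr
        exact entrySum_le_norm _
    _ = √((ω (-1) : ℝ) / ω (n - 1)) * (entrySum (conjMatrix p k (ω (n - 1))) * 4) *
          entrySum (conjMatrixInv p k (ω (-1))) * ‖AIter k ω n‖ := by ring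
    _ ≤ K * ‖AIter k ω n‖ := by
        gcongr
        exact hK _ (hω.1 _).2 _ (hω.1 _).2

lemma exists_norm_AIter_le (ℓ : ℕ) (W : Set (ℕ × ℕ)) (k : ℝ) (n : ℕ) :
    ∃ K, ∀ ω ∈ SFT ℓ W, ‖AIter k ω n‖ ≤ K := by
  obtain ⟨K, hK⟩ := exists_forall_letters_le ℓ fun a b =>
    ‖Acoc k fun i => if i = 0 then a else b‖
  have hAcoc : ∀ ω ∈ SFT ℓ W, ‖Acoc k ω‖ ≤ K := fun ω hω => by
    convert hK (ω 0) (hω.1 0).2 (ω (-1)) (hω.1 (-1)).2 using 2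
    simp [Acoc]
  induction n with
  | zero => exact ⟨‖(1 : Matrix (Fin 2) (Fin 2) ℝ)‖, fun ω _ => le_rfl⟩
  | succ n ih =>
    obtain ⟨K', hK'⟩ := ih
    refine ⟨K * K', fun ω hω => ?_⟩
    have h := hAcoc _ (shift_iterate_mem_SFT hω n)
    exact (Matrix.l2_opNorm_mul _ _).trans
      (mul_le_mul h (hK' ω hω) (norm_nonneg _) ((norm_nonneg _).trans h))

lemma measurable_norm_AIter (k : ℝ) (n : ℕ) : Measurable fun ω => ‖AIter k ω n‖ := by
  have hshift : Continuous shift := continuous_pi fun i => continuous_apply _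
  have hA : Continuous (Acoc k) := by
    have : Acoc k = (fun x : ℕ × ℕ => Acoc k fun i => if i = 0 then x.1 else x.2) ∘
        fun ω => (ω 0, ω (-1)) := by
      funext ω
      simp [Acoc]
    rw [this]
    exact continuous_of_discreteTopology.comp ((continuous_apply _).prodMk (continuous_apply _))
  have hAn : Continuous fun ω => AIter k ω n := by
    induction n with
    | zero => exact continuous_const
    | succ n ih => exact (hA.comp (hshift.iterate n)).matrix_mul ih
  exact (continuous_norm.comp hAn).measurable

/-- If the Lyapunov exponent vanishes, so does the growth rate of the conjugated cocycle. -/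
lemma tendsto_log_entrySum_wordProd {ℓ p : ℕ} {W : Set (ℕ × ℕ)} {μ : Measure (ℤ → ℕ)}
    [IsProbabilityMeasure μ] (hconc : μ (SFT ℓ W)ᶜ = 0) (hp : 1 ≤ p) {k : ℝ} (hk : sin k ≠ 0)
    (hL : Tendsto (fun n : ℕ => (1 / (n : ℝ)) * ∫ ω, log ‖AIter k ω n‖ ∂μ) atTop (𝓝 0)) :
    Tendsto (fun N : ℕ => (∫ ω, log (entrySum (wordProd (letterMatrix ℓ p k) ω N)) ∂μ) / N)
      atTop (𝓝 0) := by
  have hSFT : ∀ᵐ ω ∂μ, ω ∈ SFT ℓ W := hconc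
  obtain ⟨K, hK⟩ := exists_entrySum_wordProd_le_norm W hp hk (ℓ := ℓ)
  have hone : ∀ ω n, 1 ≤ entrySum (wordProd (letterMatrix ℓ p k) ω n) := fun ω n =>
    one_le_entrySum (det_wordProd (det_letterMatrix hp ℓ k) ω n)
  have hKpos : 0 < K := by
    obtain ⟨ω, hω⟩ := hSFT.exists
    by_contra! h
    linarith [hone ω 0, hK ω hω 0, mul_nonpos_of_nonpos_of_nonneg h (norm_nonneg (AIter k ω 0))]
  have hApos : ∀ ω ∈ SFT ℓ W, ∀ n, 0 < ‖AIter k ω n‖ := fun ω hω n =>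
    pos_of_mul_pos_right (by linarith [hone ω n, hK ω hω n]) hKpos.le
  have hlog : ∀ ω ∈ SFT ℓ W, ∀ n, log (entrySum (wordProd (letterMatrix ℓ p k) ω n)) ≤
      log K + log ‖AIter k ω n‖ := fun ω hω n => by
    rw [← log_mul hKpos.ne' (hApos ω hω n).ne']
    exact log_le_log (by linarith [hone ω n]) (hK ω hω n)
  have hnonneg : ∀ ω n, 0 ≤ log (entrySum (wordProd (letterMatrix ℓ p k) ω n)) := fun ω n =>
    log_nonneg (hone ω n)
  have hintA : ∀ n, Integrable (fun ω => log ‖AIter k ω n‖) μ := fun n => by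
    obtain ⟨B, hB⟩ := exists_norm_AIter_le ℓ W k n
    refine Integrable.of_bound (measurable_log.comp (measurable_norm_AIter k n)).aestronglyMeasurable
      (max (log K) (log B)) ?_
    filter_upwards [hSFT] with ω hω
    rw [norm_eq_abs, abs_le']
    refine ⟨(log_le_log (hApos ω hω n) (hB ω hω)).trans (le_max_right _ _), ?_⟩
    linarith [hlog ω hω n, hnonneg ω n, le_max_left (log K) (log B)]
  have hintW : ∀ n, Integrable (fun ω => log (entrySum (wordProd (letterMatrix ℓ p k) ω n))) μ :=
    fun n => by
      obtain ⟨B, hB⟩ := exists_entrySum_wordProd_le (exists_entrySum_letterMatrix_le ℓ p k) n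
      have hm : Measurable fun ω => entrySum (wordProd (letterMatrix ℓ p k) ω n) :=
        Finset.measurable_sum _ fun i _ => Finset.measurable_sum _ fun j _ =>
          (measurable_wordProd_apply n i j).abs
      refine Integrable.of_bound (measurable_log.comp hm).aestronglyMeasurable (log B)
        (Eventually.of_forall fun ω => ?_)
      rw [norm_eq_abs]
      rw [abs_of_nonneg (hnonneg ω n)]
      exact log_le_log (by linarith [hone ω n]) (hB ω)
  have hup : Tendsto (fun N : ℕ => log K / N + (1 / (N : ℝ)) * ∫ ω, log ‖AIter k ω N‖ ∂μ) atTop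
      (𝓝 0) := by
    simpa using (tendsto_const_div_atTop_nhds_zero_nat (log K)).add hL
  refine squeeze_zero (fun N => div_nonneg (integral_nonneg fun ω => hnonneg ω N) N.cast_nonneg)
    (fun N => ?_) hup
  rw [one_div_mul_eq_div, ← add_div]
  gcongr
  calc ∫ ω, log (entrySum (wordProd (letterMatrix ℓ p k) ω N)) ∂μ
      ≤ ∫ ω, log K + log ‖AIter k ω N‖ ∂μ := by
        refine integral_mono_ae (hintW N) ((integrable_const _).add (hintA N)) ?_
        filter_upwards [hSFT] with ω hω
        exact hlog ω hω N
    _ = log K + ∫ ω, log ‖AIter k ω N‖ ∂μ := by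
        rw [integral_add (integrable_const _) (hintA N)]
        simp

end Conjugation

section Word

lemma isOpen_letter (n : ℤ) (s : Set ℕ) : IsOpen {ω : ℤ → ℕ | ω n ∈ s} :=
  (isOpen_discrete s).preimage (continuous_apply n : Continuous fun ω : ℤ → ℕ => ω n)

lemma letterMean_wordProd {ℓ : ℕ} {W : Set (ℕ × ℕ)} {μ : Measure (ℤ → ℕ)} [IsProbabilityMeasure μ]
    (hμ : MeasurePreserving shift μ μ) (hsupp : FullSupport ℓ W μ)
    {G : ℕ → Matrix (Fin 2) (Fin 2) ℝ} {ω : ℤ → ℕ} (hω : ω ∈ SFT ℓ W)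
    (hc : ∀ n : ℕ, AsympIndep G μ (ω n)) (n : ℕ) {f : (Fin 2 → ℝ) → ℝ} (hf : BddMeasurable f) :
    letterMean G μ (ω n) f = letterMean G μ (ω 0) fun x => f (wordProd G ω n *ᵥ x) := by
  induction n generalizing f with
  | zero => simp [wordProd]
  | succ n ih =>
    have hopen : IsOpen {ω' : ℤ → ℕ | ω' 0 = ω n ∧ ω' 1 = ω (n + 1 : ℕ)} :=
      (isOpen_letter 0 {ω n}).inter (isOpen_letter 1 {ω (n + 1 : ℕ)})
    have hpos := hsupp _ hopen ⟨shift^[n] ω, by simp [shift_iterate_apply, add_comm],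
      shift_iterate_mem_SFT hω n⟩
    have hfG : BddMeasurable fun x => f (G (ω n) *ᵥ x) := hf.comp
      (measurable_mulVec (M := fun _ => G (ω n)) (fun _ _ => measurable_const) measurable_id)
    rw [letterMean_step hμ (hc n) (hc (n + 1)) hpos.ne' hf, ih hfG]
    simp only [wordProd, ← Matrix.mulVec_mulVec]

/-- An ergodic measure of full support on a subshift with a fixed point and another letter charges a
loop at the fixed letter which does not end with that letter. -/
lemma exists_loop {ℓ : ℕ} {W : Set (ℕ × ℕ)} {μ : Measure (ℤ → ℕ)} [IsProbabilityMeasure μ]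
    (hconc : μ (SFT ℓ W)ᶜ = 0) (herg : Ergodic shift μ) (hsupp : FullSupport ℓ W μ) {p : ℕ}
    (hp : ∃ x ∈ SFT ℓ W, x 0 = p) (hq : ∃ x ∈ SFT ℓ W, ∃ n, x n ≠ p) :
    ∃ ω ∈ SFT ℓ W, ω 0 = p ∧ ∃ s : ℕ, ω s ≠ p ∧ ω (s + 1 : ℕ) = p := by
  have hSFT : ∀ᵐ ω ∂μ, ω ∈ SFT ℓ W := hconc
  have hP : IsOpen {ω : ℤ → ℕ | ω 0 = p} := isOpen_letter 0 {p}
  have hB : IsOpen {ω : ℤ → ℕ | ω 0 ≠ p} := isOpen_letter 0 {p}ᶜ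
  have hPpos : 0 < μ {ω : ℤ → ℕ | ω 0 = p} := hsupp _ hP (hp.imp fun x hx => ⟨hx.2, hx.1⟩)
  have hBpos : 0 < μ {ω : ℤ → ℕ | ω 0 ≠ p} := by
    obtain ⟨x, hx, n, hn⟩ := hq
    refine hsupp _ hB ⟨fun i => x (i + n), by simpa using hn, fun i => hx.1 _, fun i => ?_⟩
    simpa [add_right_comm] using hx.2 (i + n)
  set V : Set (ℤ → ℕ) := ⋃ n : ℕ, shift^[n] ⁻¹' {ω | ω 0 ≠ p} with hV
  have hVm : MeasurableSet V := MeasurableSet.iUnion fun n =>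
    (measurable_shift.iterate n) hB.measurableSet
  have hVsub : shift ⁻¹' V ⊆ V := fun ω hω => by
    obtain ⟨n, hn⟩ := mem_iUnion.1 hω
    exact mem_iUnion.2 ⟨n + 1, hn⟩
  have hVuniv : ∀ᵐ ω ∂μ, ω ∈ V := by
    rcases herg.ae_empty_or_univ_of_preimage_ae_le hVm.nullMeasurableSet hVsub.eventuallyLE with h | h
    · refine absurd (ae_eq_empty.1 h) (hBpos.trans_le (measure_mono fun ω hω => ?_)).ne'
      exact mem_iUnion.2 ⟨0, hω⟩
    · exact eventuallyEq_univ.1 h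
  obtain ⟨ω, ⟨h0, hrec⟩, hωS, hωV⟩ :=
    ((herg.toMeasurePreserving.conservative.frequently_ae_mem_and_frequently_image_mem
      hP.measurableSet.nullMeasurableSet hPpos.ne').and_eventually (hSFT.and hVuniv)).exists
  obtain ⟨n, hn⟩ := mem_iUnion.1 hωV
  obtain ⟨m, hm, hmp⟩ := frequently_atTop.1 hrec (n + 1)
  simp only [mem_preimage, mem_ofPred_eq, shift_iterate_apply, zero_add] at hn hmp
  have hex : ∃ j : ℕ, n < j ∧ ω j = p := ⟨m, hm, hmp⟩
  classical
  obtain ⟨hj1, hj2⟩ := Nat.find_spec hex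
  obtain ⟨s, hs⟩ : ∃ s, Nat.find hex = s + 1 := Nat.exists_eq_add_one_of_ne_zero (by omega)
  rw [hs] at hj1 hj2
  refine ⟨ω, hωS, h0, s, fun hsp => ?_, hj2⟩
  have hmin := Nat.find_min hex (m := s) (by omega)
  rcases (Nat.lt_succ_iff.1 hj1).eq_or_lt with rfl | hlt
  · exact hn hsp
  · exact hmin ⟨hlt, hsp⟩

open Polynomial in
/-- The product of the matrices `X + (0, 1 / t; -t, 0)` over polynomials. -/
noncomputable def polyWord (t : ℕ → ℝ) : ℕ → Matrix (Fin 2) (Fin 2) ℂ[X]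
  | 0 => 1
  | n + 1 => !![X, C ((t n : ℂ)⁻¹); -C (t n : ℂ), X] * polyWord t n

lemma polyWord_succ_map_eval (t : ℕ → ℝ) (n : ℕ) (z : ℂ) :
    (polyWord t (n + 1)).map (Polynomial.evalRingHom z) =
      !![z, (t n : ℂ)⁻¹; -(t n : ℂ), z] * (polyWord t n).map (Polynomial.evalRingHom z) := by
  rw [polyWord, Matrix.map_mul]
  congr 1
  ext i j
  fin_cases i <;> fin_cases j <;> simp

lemma wordProd_map_ofReal {ℓ p : ℕ} {W : Set (ℕ × ℕ)} {k : ℝ} (hk : sin k ≠ 0)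
    {ω : ℤ → ℕ} (hω : ω ∈ SFT ℓ W) (n : ℕ) :
    (wordProd (letterMatrix ℓ p k) ω n).map (Complex.ofRealHom : ℝ → ℂ) =
      ((sin k : ℝ) : ℂ) ^ n • (polyWord (fun i => (ω i : ℝ) / p) n).map
        (Polynomial.evalRingHom ((cos k / sin k : ℝ) : ℂ)) := by
  have hk' : ((sin k : ℝ) : ℂ) ≠ 0 := by exact_mod_cast hk
  induction n with
  | zero => simp [wordProd, polyWord]
  | succ n ih =>
    have hG : (letterMatrix ℓ p k (ω n)).map (Complex.ofRealHom : ℝ → ℂ) = ((sin k : ℝ) : ℂ) •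
        !![((cos k / sin k : ℝ) : ℂ), (((ω n : ℝ) / p : ℝ) : ℂ)⁻¹; -(((ω n : ℝ) / p : ℝ) : ℂ),
          ((cos k / sin k : ℝ) : ℂ)] := by
      rw [letterMatrix_of_mem (hω.1 n)]
      ext i j
      fin_cases i <;> fin_cases j <;> simp <;> simp at hk' <;> field_simp
    rw [wordProd, Matrix.map_mul, ih, hG, polyWord_succ_map_eval, Matrix.smul_mul, Matrix.mul_smul,
      smul_smul, pow_succ']

lemma polyWord_map_eval_I {t : ℕ → ℝ} (ht : ∀ n, 0 < t n) (h0 : t 0 = 1) (n : ℕ) :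
    ∃ κ : ℂ, κ ≠ 0 ∧ (polyWord t (n + 1)).map (Polynomial.evalRingHom Complex.I) =
      κ • !![Complex.I, 1; -(t n : ℂ), Complex.I * t n] := by
  induction n with
  | zero =>
    refine ⟨1, one_ne_zero, ?_⟩
    rw [polyWord_succ_map_eval]
    simp [polyWord, h0]
  | succ n ih =>
    obtain ⟨κ, hκ, h⟩ := ih
    have hne : (t (n + 1) : ℂ) ≠ 0 := by exact_mod_cast (ht (n + 1)).ne'
    have hne' : (1 + t n / t (n + 1) : ℂ) ≠ 0 := by
      have : (1 + t n / t (n + 1) : ℝ) ≠ 0 := by have := ht n; have := ht (n + 1); positivity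
      exact_mod_cast this
    refine ⟨κ * (Complex.I * (1 + t n / t (n + 1))),
      mul_ne_zero hκ (mul_ne_zero Complex.I_ne_zero hne'), ?_⟩
    rw [polyWord_succ_map_eval, h, Matrix.mul_smul, mul_smul]
    congr 1
    have hI := Complex.I_sq
    ext i j
    fin_cases i <;> fin_cases j <;> simp [Matrix.mul_apply, Fin.sum_univ_two] <;> field_simp
    · linear_combination (-((t (n + 1) : ℂ) + t n)) * hI
    · ring
    · linear_combination (-(t (n + 1) : ℂ)) * hI

/-- The word attached to a loop is a rotation only for finitely many parameters. -/
lemma finite_rotation_parameters {ℓ p : ℕ} {W : Set (ℕ × ℕ)} {ω : ℤ → ℕ}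
    (hω : ω ∈ SFT ℓ W) (h0 : ω 0 = p) {s : ℕ} (hs : ω s ≠ p) :
    {k ∈ Ioo 0 π | wordProd (letterMatrix ℓ p k) ω (s + 1) 0 0 =
        wordProd (letterMatrix ℓ p k) ω (s + 1) 1 1 ∧
      wordProd (letterMatrix ℓ p k) ω (s + 1) 0 1 =
        -wordProd (letterMatrix ℓ p k) ω (s + 1) 1 0}.Finite := by
  have hp : (0 : ℝ) < p := by rw [← h0]; exact_mod_cast (hω.1 0).1
  set t : ℕ → ℝ := fun i => (ω i : ℝ) / p with ht
  have htpos : ∀ n, 0 < t n := fun n => by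
    have : (0 : ℝ) < ω n := by exact_mod_cast (hω.1 n).1
    positivity
  have ht0 : t 0 = 1 := by simp [ht, h0, hp.ne']
  have hts : t s ≠ 1 := fun h => hs (by
    rw [ht] at h
    simp only [div_eq_one_iff_eq hp.ne'] at h
    exact_mod_cast h)
  set M := polyWord t (s + 1) with hM
  set P : Polynomial ℂ := M 0 0 - M 1 1 + Polynomial.C Complex.I * (M 0 1 + M 1 0) with hP
  have hPne : P ≠ 0 := fun hP0 => by
    obtain ⟨κ, hκ, hκM⟩ := polyWord_map_eval_I htpos ht0 s
    have hentry : ∀ i j, (M i j).eval Complex.I =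
        (κ • !![Complex.I, 1; -(t s : ℂ), Complex.I * t s]) i j := fun i j =>
      congrFun (congrFun hκM i) j
    have h1 : P.eval Complex.I = κ * Complex.I * (2 * (1 - t s)) := by
      rw [hP]
      simp only [Polynomial.eval_add, Polynomial.eval_sub, Polynomial.eval_mul, Polynomial.eval_C,
        hentry]
      simp
      ring
    rw [hP0, Polynomial.eval_zero] at h1
    have h2 : (1 - t s : ℂ) ≠ 0 := by
      rw [sub_ne_zero]
      exact_mod_cast hts.symm
    exact mul_ne_zero (mul_ne_zero hκ Complex.I_ne_zero) (mul_ne_zero two_ne_zero h2) h1.symm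
  refine Set.Finite.of_finite_image (f := fun k => ((cos k / sin k : ℝ) : ℂ))
    ((P.rootSet_finite ℂ).subset ?_) ?_
  · rintro _ ⟨k, ⟨hk, hk1, hk2⟩, rfl⟩
    have hsin : sin k ≠ 0 := (sin_pos_of_mem_Ioo hk).ne'
    have hsin' : ((sin k : ℝ) : ℂ) ^ (s + 1) ≠ 0 := pow_ne_zero _ (by exact_mod_cast hsin)
    have hentry : ∀ i j, ((wordProd (letterMatrix ℓ p k) ω (s + 1) i j : ℝ) : ℂ) =
        ((sin k : ℝ) : ℂ) ^ (s + 1) * (M i j).eval ((cos k / sin k : ℝ) : ℂ) := fun i j =>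
      congrFun (congrFun (wordProd_map_ofReal hsin hω (s + 1)) i) j
    have e1 : (M 0 0).eval ((cos k / sin k : ℝ) : ℂ) = (M 1 1).eval ((cos k / sin k : ℝ) : ℂ) :=
      mul_left_cancel₀ hsin' (by rw [← hentry, ← hentry, hk1])
    have e2 : (M 0 1).eval ((cos k / sin k : ℝ) : ℂ) = -(M 1 0).eval ((cos k / sin k : ℝ) : ℂ) :=
      mul_left_cancel₀ hsin' (by rw [mul_neg, ← hentry, ← hentry, hk2]; simp)
    rw [Polynomial.mem_rootSet_of_ne hPne, Polynomial.coe_aeval_eq_eval, hP, Polynomial.eval_add,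
      Polynomial.eval_sub, Polynomial.eval_mul, Polynomial.eval_add, e1, e2]
    ring
  · intro k hk k' hk' h
    have hsk := sin_pos_of_mem_Ioo hk.1
    have hsk' := sin_pos_of_mem_Ioo hk'.1
    have h1 : cos k / sin k = cos k' / sin k' := Complex.ofReal_injective h
    rw [div_eq_div_iff hsk.ne' hsk'.ne'] at h1
    have h2 : sin (k - k') = 0 := by rw [sin_sub]; linarith
    have h3 := (sin_eq_zero_iff_of_lt_of_lt (by linarith [hk.1.1, hk'.1.2])
      (by linarith [hk.1.2, hk'.1.1])).1 h2
    linarith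

end Word

/-- Vanishing growth forces the words attached to loops at a fixed letter to be rotations. -/
lemma wordProd_eq_rotation {ℓ : ℕ} {W : Set (ℕ × ℕ)} {μ : Measure (ℤ → ℕ)}
    [IsProbabilityMeasure μ] (hconc : μ (SFT ℓ W)ᶜ = 0) (hμ : MeasurePreserving shift μ μ)
    (hlps : LocalProductStructure ℓ W μ) (hsupp : FullSupport ℓ W μ) {p : ℕ} {x : ℤ → ℕ}
    (hx : x ∈ SFT ℓ W) (hx0 : ∀ n, x n = p) {k : ℝ} (hsin : sin k ≠ 0) (hcos : cos k ≠ 0)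
    (hL : Tendsto (fun n : ℕ => (1 / (n : ℝ)) * ∫ ω, log ‖AIter k ω n‖ ∂μ) atTop (𝓝 0))
    {ω : ℤ → ℕ} (hω : ω ∈ SFT ℓ W) (h0 : ω 0 = p) {n : ℕ} (hn : ω n = p) :
    wordProd (letterMatrix ℓ p k) ω n 0 0 = wordProd (letterMatrix ℓ p k) ω n 1 1 ∧
      wordProd (letterMatrix ℓ p k) ω n 0 1 = -wordProd (letterMatrix ℓ p k) ω n 1 0 := by
  have hp : 1 ≤ p ∧ p ≤ ℓ := by rw [← hx0 0]; exact hx.1 0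
  have hdet := det_letterMatrix hp.1 ℓ k
  have hpos : ∀ y ∈ SFT ℓ W, ∀ m : ℕ, μ {ω | ω 0 = y m} ≠ 0 := fun y hy m =>
    (hsupp _ (isOpen_letter 0 {y m})
      ⟨shift^[m] y, by simp [shift_iterate_apply], shift_iterate_mem_SFT hy m⟩).ne'
  have hindep : ∀ y ∈ SFT ℓ W, ∀ m : ℕ, AsympIndep (letterMatrix ℓ p k) μ (y m) :=
    fun y hy m => asympIndep hconc hlps hμ hdet (exists_entrySum_letterMatrix_le ℓ p k)
      (tendsto_log_entrySum_wordProd hconc hp.1 hsin hL) (hy.1 m).1 (hy.1 m).2 (hpos y hy m)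
  have hmean : IsMean (letterMean (letterMatrix ℓ p k) μ p) := by
    have := isMean_letterMean hμ hdet (hpos x hx 0) (hindep x hx 0)
    rwa [hx0] at this
  refine hmean.eq_rotation hsin hcos (fun f hf => ?_) (det_wordProd hdet ω n) fun f hf => ?_
  · have := letterMean_wordProd hμ hsupp hx (hindep x hx) 1 hf
    simpa [wordProd, hx0, letterMatrix_self hp] using this.symm
  · have := letterMean_wordProd hμ hsupp hω (hindep ω hω) n hf
    rw [hn, h0] at this
    exact this.symm

/-- Suppose `μ` is a shift-ergodic Borel probability measure on `Ω` that has a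
local product structure and full support, `T` has a fixed point in `Ω`, and `Ω`
contains a point that is not a fixed point.  Then the set
`𝔏(A,μ) = {k ∈ [0,π] : L(A^{(k)}, μ) = 0}` is finite. -/
theorem statement4 (ℓ : ℕ) (hℓ : 1 < ℓ) (W : Set (ℕ × ℕ))
    (μ : Measure (ℤ → ℕ)) [IsProbabilityMeasure μ]
    (hconc : μ (SFT ℓ W)ᶜ = 0)
    (herg : Ergodic shift μ)
    (hlps : LocalProductStructure ℓ W μ)
    (hsupp : FullSupport ℓ W μ)
    (hfix : ∃ p ∈ SFT ℓ W, shift p = p)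
    (hnonfix : ∃ q ∈ SFT ℓ W, shift q ≠ q)
    (L : ℝ → ℝ)
    (hL : ∀ k : ℝ,
      Tendsto (fun n : ℕ => (1 / (n : ℝ)) * ∫ ω, Real.log ‖AIter k ω n‖ ∂μ)
        atTop (𝓝 (L k))) :
    {k ∈ Icc (0 : ℝ) π | L k = 0}.Finite := by
  obtain ⟨x, hx, hxfix⟩ := hfix
  obtain ⟨q, hq, hqfix⟩ := hnonfix
  have hstep : ∀ n, x (n + 1) = x n := fun n => congrFun hxfix n
  have hconst : ∀ n, x n = x 0 := fun n => by
    induction n using Int.induction_on with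
    | zero => rfl
    | succ n ih => rw [hstep, ih]
    | pred n ih => rw [← hstep, sub_add_cancel, ih]
  have hq' : ∃ n, q n ≠ x 0 := by
    by_contra! h
    exact hqfix (funext fun n => (h (n + 1)).trans (h n).symm)
  obtain ⟨ω, hω, h0, s, hs, hs1⟩ := exists_loop hconc herg hsupp ⟨x, hx, rfl⟩ ⟨q, hq, hq'⟩
  refine ((finite_rotation_parameters hω h0 hs).union
    (Set.toFinite {0, π / 2, π})).subset fun k ⟨hk, hLk⟩ => ?_
  by_cases hspecial : k ∈ ({0, π / 2, π} : Set ℝ)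
  · exact Or.inr hspecial
  simp only [mem_insert_iff, mem_singleton_iff, not_or] at hspecial
  have hkI : k ∈ Ioo 0 π :=
    ⟨hk.1.lt_of_ne (Ne.symm hspecial.1), hk.2.lt_of_ne hspecial.2.2⟩
  have hcos : cos k ≠ 0 := fun h => hspecial.2.1 <| injOn_cos hk
    ⟨by positivity, half_le_self pi_pos.le⟩ (h.trans cos_pi_div_two.symm)
  exact Or.inl ⟨hkI, wordProd_eq_rotation hconc herg.toMeasurePreserving hlps hsupp hx hconst
    (sin_pos_of_mem_Ioo hkI).ne' hcos (hLk ▸ hL k) hω h0 hs1⟩
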